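/- arXiv:1712.10324 — 3 statements merged into one kernel-verified Lean document; each statement's English description precedes it below -/
import Mathlib

section
/- For every real number α > 0, the improper integral ∫₀^∞ tanh(π x) tanh(α x) cos(2α x²) dx equals 0; precisely, the function T ↦ ∫₀^T tanh(π x) tanh(α x) cos(2α x²) dx tends to 0 as T → ∞. -/
open Real MeasureTheory

/-!
Insert the sine-transform representation `tanh x = ∫ sin (2 x u) / sinh (π u) du`
(`integral_sin_div_sinh`) for `tanh (α x)` and apply Fubini on `(0, T) × ℝ`. Since
`2 sin (2 α x u) cos (2 α x²) = sin (2 α (x² + x u)) - sin (2 α (x² - x u))`, the inner integral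
is half the integral over `(-T, T)` of `tanh (π x) sin (2 α (x² + x u))`. Completing the square,
with `y = x + u / 2`, turns this into an integral of
`tanh (π (y - u / 2)) sin (2 α (y² - u² / 4))` over the shifted window `(-T + u / 2, T + u / 2)`.

On the symmetric window `(-T, T)` only the even part in `y` matters, and by the identity
`tanh a - tanh b = sinh (a - b) / (cosh a cosh b)` it produces the factor `- sinh (π u)`, which
cancels the denominator of the sine transform and leaves the absolutely integrable kernel
`sin (2 α (y² - u² / 4)) / (cosh (2 π y) + cosh (π u))`. After `y = v / 2` this kernel is
antisymmetric in `(u, v)`, so its integral over the plane is zero (`integral_kern_eq_zero`).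

The discrepancy between the two windows consists of two integrals over intervals of length
`|u| / 2` near `±T`. Their difference is at most `|u|` in absolute value, so dividing by
`sinh (π u)` gives an integrable dominating function, and for fixed `u` each of them tends to
zero because of the oscillation (`tendsto_window`). Dominated convergence concludes.

The representation of `tanh` follows by expanding `1 / sinh` as a geometric series and comparing
with the partial fraction expansion of `tanh`, which is deduced from that of the cotangent.
-/

/-! ### The hyperbolic tangent: regularity and partial fractions -/

@[fun_prop]
theorem continuous_tanh' : Continuous Real.tanh := by
  have : Real.tanh = fun x => Real.sinh x / Real.cosh x := funext Real.tanh_eq_sinh_div_cosh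
  rw [this]
  exact Real.continuous_sinh.div Real.continuous_cosh fun x => (Real.cosh_pos x).ne'

theorem hasSum_iff_of_eq {E : Type*} [AddCommMonoid E] [TopologicalSpace E] {f g : ℕ → E} {a : E}
    (h : ∀ n, f n = g n) : HasSum f a ↔ HasSum g a := by rw [funext h]

/-- Partial fraction expansion of `tanh`. With `z = i x / π`, the even-indexed terms of the
cotangent series at `2 z` are what remains after removing the odd-indexed ones, which form half
the series at `z`; their sum is `π (cot (2 i x) - cot (i x) / 2) = -(π / 2) tan (i x)`. -/
theorem hasSum_tanh (x : ℝ) :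
    HasSum (fun n : ℕ => 8 * x / (4 * x ^ 2 + π ^ 2 * (2 * n + 1) ^ 2)) (Real.tanh x) := by
  rcases eq_or_ne x 0 with rfl | hx
  · simp
  have hpi : (π : ℂ) ≠ 0 := by exact_mod_cast Real.pi_ne_zero
  have hxc : (x : ℂ) ≠ 0 := by exact_mod_cast hx
  set z : ℂ := Complex.I * x / π with hz
  have mem : ∀ r : ℝ, r ≠ 0 → (Complex.I * r / π : ℂ) ∈ Complex.integerComplement := by
    intro r hr
    rw [Complex.mem_integerComplement_iff]
    rintro ⟨n, hn⟩
    have := congrArg Complex.im hn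
    have h2 : (Complex.I * r / π : ℂ).im = r / π := by
      rw [Complex.div_ofReal_im]; simp
    rw [h2] at this
    rw [Complex.intCast_im] at this
    exact div_ne_zero hr Real.pi_ne_zero this.symm
  have h1 : z ∈ Complex.integerComplement := mem x hx
  have h2 : 2 * z ∈ Complex.integerComplement := by
    have := mem (2 * x) (by simpa using hx)
    convert this using 1
    push_cast; rw [hz]; ring
  have s1 := (summable_cotTerm h1).hasSum
  rw [show (∑' n, cotTerm z n) = π * Complex.cot (π * z) - 1 / z from (cot_series_rep' h1).symm] at s1
  have s2 := (summable_cotTerm h2)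
  have se : Summable (fun k : ℕ => cotTerm (2 * z) (2 * k)) :=
    s2.comp_injective (fun a b h => by simpa using h)
  have so : HasSum (fun k : ℕ => cotTerm (2 * z) (2 * k + 1)) ((π * Complex.cot (π * z) - 1 / z) / 2) := by
    have := s1.div_const 2
    refine (hasSum_iff_of_eq fun k => ?_).mpr this
    simp only [cotTerm]
    push_cast
    rw [show (2 * z - (2 * k + 1 + 1)) = 2 * (z - (k + 1)) by ring,
      show (2 * z + (2 * k + 1 + 1)) = 2 * (z + (k + 1)) by ring]
    simp only [one_div, mul_inv]
    ring
  have stot := se.hasSum.even_add_odd so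
  have e := stot.tsum_eq
  rw [show (∑' n, cotTerm (2 * z) n) = π * Complex.cot (π * (2 * z)) - 1 / (2 * z)
    from (cot_series_rep' h2).symm] at e
  have hpz : (π : ℂ) * z = x * Complex.I := by rw [hz]; field_simp
  have hpz2 : (π : ℂ) * (2 * z) = 2 * (x * Complex.I) := by rw [← hpz]; ring
  rw [hpz, hpz2] at e
  have hcos : Complex.cos (x * Complex.I) = (Real.cosh x : ℂ) := by
    rw [Complex.cos_mul_I]; simp
  have hsin : Complex.sin (x * Complex.I) = (Real.sinh x : ℂ) * Complex.I := by
    rw [Complex.sin_mul_I]; simp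
  have hc0 : (Real.cosh x : ℂ) ≠ 0 := by exact_mod_cast (Real.cosh_pos x).ne'
  have hs0 : (Real.sinh x : ℂ) ≠ 0 := by exact_mod_cast (by simpa using hx)
  have hval : (∑' k : ℕ, cotTerm (2 * z) (2 * k)) = -(π / 2) * Complex.I * (Real.tanh x : ℂ) := by
    have hz0 : z ≠ 0 := Complex.integerComplement.ne_zero h1
    have : (∑' k : ℕ, cotTerm (2 * z) (2 * k)) = π * Complex.cot (2 * (x * Complex.I)) - 1 / (2 * z)
        - (π * Complex.cot (x * Complex.I) - 1 / z) / 2 := by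
      rw [e]; ring
    rw [this, Complex.cot_eq_cos_div_sin, Complex.cot_eq_cos_div_sin, Complex.cos_two_mul,
      Complex.sin_two_mul, hcos, hsin, Real.tanh_eq_sinh_div_cosh]
    have hI : Complex.I ≠ 0 := Complex.I_ne_zero
    have hch : (Real.cosh x : ℂ) ^ 2 = (Real.sinh x : ℂ) ^ 2 + 1 := by
      exact_mod_cast Real.cosh_sq x
    push_cast
    push_cast at hch hc0 hs0
    rw [hz]
    field_simp
    linear_combination (x : ℂ) * hch + (x : ℂ) * Complex.sinh x ^ 2 * Complex.I_sq
  have sfin := se.hasSum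
  rw [hval] at sfin
  have sfin2 := sfin.mul_left (2 * Complex.I / π)
  rw [show 2 * Complex.I / π * (-(π / 2) * Complex.I * (Real.tanh x : ℂ)) = (Real.tanh x : ℂ) by
    field_simp; rw [Complex.I_sq]; ring] at sfin2
  rw [← Complex.hasSum_ofReal]
  refine (hasSum_iff_of_eq fun k => ?_).mpr sfin2
  rw [cotTerm_identity h2]
  push_cast
  have hd : (4 * (x:ℂ) ^ 2 + π ^ 2 * (2 * k + 1) ^ 2) ≠ 0 := by
    have : (0:ℝ) < 4 * x ^ 2 + π ^ 2 * (2 * k + 1) ^ 2 := by positivity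
    exact_mod_cast this.ne'
  have hd2 : (2 * z + (2 * k + 1)) * (2 * z - (2 * k + 1)) =
      - (4 * (x:ℂ) ^ 2 + π ^ 2 * (2 * k + 1) ^ 2) / π ^ 2 := by
    rw [hz]; field_simp
    linear_combination (4 * x ^ 2 : ℂ) * Complex.I_sq
  rw [hd2, hz]
  field_simp
  rw [Complex.I_sq]; ring

/-! ### The sine transform of `1 / sinh` -/

theorem sinh_weight_bound (u : ℝ) : |u / Real.sinh (π * u)| ≤ Real.exp (-|u|) := by
  wlog hu : 0 < u generalizing u
  · rcases eq_or_lt_of_le (not_lt.mp hu) with rfl | h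
    · simp
    · have := this (-u) (by linarith)
      simpa [mul_neg, Real.sinh_neg, neg_div_neg_eq] using this
  have hs : 0 < Real.sinh (π * u) := Real.sinh_pos_iff.mpr (by positivity)
  rw [abs_of_pos (by positivity), abs_of_pos hu, Real.exp_neg, div_le_iff₀ hs, inv_mul_eq_div,
    le_div_iff₀ (Real.exp_pos _)]
  -- `sinh v = 2 sinh (v / 2) cosh (v / 2) ≥ v exp (v / 2) / 2` with `v = π u`.
  have h1 : Real.sinh (π * u) = 2 * Real.sinh (π * u / 2) * Real.cosh (π * u / 2) := by
    rw [← Real.sinh_two_mul]; ring_nf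
  have h2 : π * u / 2 ≤ Real.sinh (π * u / 2) := Real.self_le_sinh_iff.mpr (by positivity)
  have h3 : Real.exp (π * u / 2) / 2 ≤ Real.cosh (π * u / 2) := by
    rw [Real.cosh_eq]; have := Real.exp_pos (-(π * u / 2)); linarith
  have h4 : Real.exp u ≤ Real.exp (π * u / 2) := by
    apply Real.exp_le_exp.mpr; nlinarith [Real.pi_gt_three]
  have h5 : 2 ≤ π := by linarith [Real.pi_gt_three]
  rw [h1]
  calc u * Real.exp u ≤ u * Real.exp (π * u / 2) := by gcongr
    _ ≤ (π * u / 2) * Real.exp (π * u / 2) := by gcongr; nlinarith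
    _ = 2 * (π * u / 2) * (Real.exp (π * u / 2) / 2) := by ring
    _ ≤ _ := by gcongr

theorem integrable_exp_neg_mul_abs' {c : ℝ} (hc : 0 < c) :
    Integrable (fun u : ℝ => Real.exp (-(c * |u|))) := by
  rw [← integrableOn_univ, ← Set.Iic_union_Ioi (a := (0:ℝ))]
  refine IntegrableOn.union ?_ ?_
  · refine (integrableOn_exp_mul_Iic hc 0).congr_fun (fun u hu => ?_) measurableSet_Iic
    simp only [abs_of_nonpos (Set.mem_Iic.mp hu)]; ring_nf
  · refine (integrableOn_exp_mul_Ioi (neg_lt_zero.mpr hc) 0).congr_fun (fun u hu => ?_)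
      measurableSet_Ioi
    simp only [abs_of_pos (Set.mem_Ioi.mp hu)]; ring_nf

theorem sin_div_sinh_bound (a u : ℝ) : |Real.sin (a * u) / Real.sinh (π * u)| ≤
    |a| * Real.exp (-|u|) := by
  rw [abs_div]
  calc _ ≤ |a * u| / |Real.sinh (π * u)| := div_le_div_of_nonneg_right Real.abs_sin_le_abs (abs_nonneg _)
    _ = |a| * |u / Real.sinh (π * u)| := by rw [abs_mul, abs_div]; ring
    _ ≤ _ := by gcongr; exact sinh_weight_bound u

theorem integrable_sin_div_sinh (a : ℝ) :
    Integrable (fun u : ℝ => Real.sin (a * u) / Real.sinh (π * u)) := by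
  have h := (integrable_exp_neg_mul_abs' one_pos).const_mul |a|
  simp only [one_mul] at h
  refine h.mono' (Measurable.aestronglyMeasurable (by fun_prop)) (Filter.Eventually.of_forall fun u => ?_)
  exact sin_div_sinh_bound a u

theorem integral_sin_mul_exp (a : ℝ) {b : ℝ} (hb : 0 < b) :
    ∫ u in Set.Ioi (0:ℝ), Real.sin (a * u) * Real.exp (-(b * u)) = a / (a ^ 2 + b ^ 2) := by
  have hre : (-(b:ℂ) + a * Complex.I).re < 0 := by simpa using hb
  have h := integral_exp_mul_complex_Ioi hre 0
  have h' := congrArg Complex.im h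
  rw [← RCLike.im_to_complex, ← integral_im (integrableOn_exp_mul_complex_Ioi hre 0)] at h'
  have e1 : ∀ u : ℝ, RCLike.im (Complex.exp ((-(b:ℂ) + a * Complex.I) * u)) =
      Real.sin (a * u) * Real.exp (-(b * u)) := by
    intro u
    rw [RCLike.im_to_complex, Complex.exp_im]
    simp [mul_comm]
  simp only [e1] at h'
  rw [h']
  have : a ^ 2 + b ^ 2 ≠ 0 := by positivity
  simp [Complex.div_im, Complex.normSq_apply]
  field_simp
  ring

theorem hasSum_inv_sinh {u : ℝ} (hu : 0 < u) :
    HasSum (fun n : ℕ => 2 * Real.exp (-((2 * n + 1) * π * u))) (1 / Real.sinh (π * u)) := by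
  have hr : Real.exp (-(2 * (π * u))) < 1 := by
    rw [Real.exp_lt_one_iff]; have : 0 < π * u := by positivity
    linarith
  have h := (hasSum_geometric_of_lt_one (Real.exp_pos _).le hr).mul_left (2 * Real.exp (-(π * u)))
  have hv : 1 / Real.sinh (π * u) =
      2 * Real.exp (-(π * u)) * (1 - Real.exp (-(2 * (π * u))))⁻¹ := by
    have e : Real.exp (-(2 * (π * u))) = Real.exp (-(π * u)) * Real.exp (-(π * u)) := by
      rw [← Real.exp_add]; ring_nf
    rw [Real.sinh_eq, e]
    rw [e] at hr
    have h3 : Real.exp (π * u) = (Real.exp (-(π * u)))⁻¹ := by rw [Real.exp_neg, inv_inv]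
    rw [h3]
    have := Real.exp_pos (-(π * u))
    have h4 : 1 - Real.exp (-(π * u)) * Real.exp (-(π * u)) ≠ 0 := by linarith
    have h5 : (Real.exp (-(π * u)))⁻¹ - Real.exp (-(π * u)) ≠ 0 := by
      have : (Real.exp (-(π * u)))⁻¹ - Real.exp (-(π * u)) = (1 - Real.exp (-(π * u)) * Real.exp (-(π * u))) / Real.exp (-(π * u)) := by
        field_simp
      rw [this]; positivity
    field_simp
  rw [hv]
  refine (hasSum_iff_of_eq fun n => ?_).mpr h
  rw [← Real.exp_nat_mul, mul_assoc 2 (Real.exp _), ← Real.exp_add]; ring_nf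

/-- `tanh` as a sine transform. The junk value of the integrand at `u = 0` is irrelevant. -/
theorem integral_sin_div_sinh (x : ℝ) :
    ∫ u : ℝ, Real.sin (2 * x * u) / Real.sinh (π * u) = Real.tanh x := by
  have heven : ∀ u : ℝ, Real.sin (2 * x * |u|) / Real.sinh (π * |u|) =
      Real.sin (2 * x * u) / Real.sinh (π * u) := by
    intro u
    rcases abs_choice u with h | h <;> rw [h]
    simp [Real.sinh_neg, neg_div_neg_eq]
  have h1 := integral_comp_abs (f := fun u => Real.sin (2 * x * u) / Real.sinh (π * u))
  simp only [heven] at h1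
  rw [h1]
  have hint := (integrable_sin_div_sinh (2 * x)).restrict (s := Set.Ioi 0)
  have hS : ∀ u ∈ Set.Ioi (0:ℝ), HasSum
      (fun n : ℕ => 2 * (Real.sin (2 * x * u) * Real.exp (-((2 * n + 1) * π * u))))
      (Real.sin (2 * x * u) / Real.sinh (π * u)) := by
    intro u hu
    have := (hasSum_inv_sinh hu).mul_left (Real.sin (2 * x * u))
    rw [mul_one_div] at this
    exact (hasSum_iff_of_eq fun n => by ring).mpr this
  have hB : ∀ u ∈ Set.Ioi (0:ℝ), HasSum
      (fun n : ℕ => 2 * (|Real.sin (2 * x * u)| * Real.exp (-((2 * n + 1) * π * u))))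
      (|Real.sin (2 * x * u) / Real.sinh (π * u)|) := by
    intro u hu
    have := (hasSum_inv_sinh hu).mul_left |Real.sin (2 * x * u)|
    have hp : 0 < Real.sinh (π * u) := Real.sinh_pos_iff.mpr (mul_pos Real.pi_pos hu)
    rw [abs_div, abs_of_pos hp]
    rw [mul_one_div] at this
    exact (hasSum_iff_of_eq fun n => by ring).mpr this
  have key := hasSum_integral_of_dominated_convergence (μ := volume.restrict (Set.Ioi (0:ℝ)))
    (F := fun (n : ℕ) u => 2 * (Real.sin (2 * x * u) * Real.exp (-((2 * n + 1) * π * u))))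
    (f := fun u => Real.sin (2 * x * u) / Real.sinh (π * u))
    (fun (n : ℕ) u => 2 * (|Real.sin (2 * x * u)| * Real.exp (-((2 * n + 1) * π * u))))
    (fun n => by fun_prop)
    (fun n => Filter.Eventually.of_forall fun u => by simp)
    ((ae_restrict_iff' measurableSet_Ioi).mpr (Filter.Eventually.of_forall fun u hu => (hB u hu).summable))
    (by
      refine hint.abs.congr ?_
      refine (ae_restrict_iff' measurableSet_Ioi).mpr (Filter.Eventually.of_forall fun u hu => ?_)
      exact (hB u hu).tsum_eq.symm)
    ((ae_restrict_iff' measurableSet_Ioi).mpr (Filter.Eventually.of_forall hS))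
  refine HasSum.unique ?_ (hasSum_tanh x)
  refine (hasSum_iff_of_eq fun n => ?_).mp (key.mul_left 2)
  rw [integral_const_mul, integral_sin_mul_exp (2 * x) (b := (2 * n + 1) * π) (by positivity)]
  rw [mul_pow, mul_pow]
  ring

/-! ### The antisymmetric kernel -/

theorem hasDerivAt_tanh' (x : ℝ) : HasDerivAt Real.tanh (1 / Real.cosh x ^ 2) x := by
  have h := (Real.hasDerivAt_sinh x).div (Real.hasDerivAt_cosh x) (Real.cosh_pos x).ne'
  have e : Real.tanh = fun x => Real.sinh x / Real.cosh x := funext Real.tanh_eq_sinh_div_cosh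
  rw [e]
  refine h.congr_deriv ?_
  rw [← Real.cosh_sq_sub_sinh_sq x]; ring

/-- A product bound, from `cosh t ≥ exp |t| / 2` and the inequality of the means. -/
theorem inv_cosh_add_cosh_le (a b : ℝ) :
    1 / (Real.cosh a + Real.cosh b) ≤ Real.exp (-(|a| / 2)) * Real.exp (-(|b| / 2)) := by
  have hc : ∀ t : ℝ, Real.exp (|t| / 2) ^ 2 ≤ 2 * Real.cosh t := by
    intro t
    rw [← Real.cosh_abs t, Real.cosh_eq, ← Real.exp_nat_mul]
    have := Real.exp_pos (-|t|)
    rw [show ((2:ℕ):ℝ) * (|t| / 2) = |t| by push_cast; ring]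
    linarith
  have ha := hc a
  have hb := hc b
  have hp := Real.exp_pos (|a| / 2)
  have hq := Real.exp_pos (|b| / 2)
  rw [Real.exp_neg, Real.exp_neg, ← mul_inv, one_div]
  apply inv_anti₀ (by positivity)
  nlinarith [sq_nonneg (Real.exp (|a| / 2) - Real.exp (|b| / 2))]

/-- The absolutely integrable kernel that remains once the factor `sinh (π u)` has cancelled. It is
antisymmetric under exchanging `u` and `2 y`. -/
noncomputable def kern (α u y : ℝ) : ℝ :=
  Real.sin (2 * α * (y ^ 2 - u ^ 2 / 4)) / (Real.cosh (2 * π * y) + Real.cosh (π * u))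

theorem continuous_kern (α : ℝ) : Continuous (Function.uncurry (kern α)) := by
  unfold kern Function.uncurry
  refine Continuous.div (by fun_prop) (by fun_prop) fun p => ?_
  have := Real.cosh_pos (2 * π * p.2)
  have := Real.cosh_pos (π * p.1)
  positivity

theorem continuous_kern_right (α u : ℝ) : Continuous (kern α u) := by
  unfold kern
  refine Continuous.div (by fun_prop) (by fun_prop) fun y => ?_
  have := Real.cosh_pos (2 * π * y)
  have := Real.cosh_pos (π * u)
  positivity

theorem abs_kern_le (α u y : ℝ) :
    |kern α u y| ≤ Real.exp (-(π / 2 * |u|)) * Real.exp (-(π * |y|)) := by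
  have h := inv_cosh_add_cosh_le (2 * π * y) (π * u)
  have h1 := Real.cosh_pos (2 * π * y)
  have h2 := Real.cosh_pos (π * u)
  rw [abs_mul, abs_mul, abs_mul, abs_of_pos Real.pi_pos, abs_of_pos (two_pos : (0:ℝ) < 2)] at h
  rw [kern, abs_div, abs_of_pos (by positivity : 0 < Real.cosh (2 * π * y) + Real.cosh (π * u))]
  calc _ ≤ 1 / (Real.cosh (2 * π * y) + Real.cosh (π * u)) := by
        gcongr; exact Real.abs_sin_le_one _
    _ ≤ _ := h
    _ = _ := by rw [mul_comm]; ring_nf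

theorem integrable_kern (α : ℝ) :
    Integrable (Function.uncurry (kern α)) (volume.prod volume) := by
  have h := (integrable_exp_neg_mul_abs' (by positivity : 0 < π / 2)).mul_prod
    (integrable_exp_neg_mul_abs' Real.pi_pos)
  exact h.mono' (continuous_kern α).aestronglyMeasurable
    (Filter.Eventually.of_forall fun p => abs_kern_le α p.1 p.2)

/-- Exchanging `u` and `v = 2 y` changes the sign of the kernel, so its integral vanishes. -/
theorem integral_kern_eq_zero (α : ℝ) : ∫ u : ℝ, ∫ y : ℝ, kern α u y = 0 := by
  have hscale : ∀ u, ∫ v : ℝ, kern α u (2⁻¹ * v) = 2 * ∫ y : ℝ, kern α u y := by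
    intro u
    rw [Measure.integral_comp_mul_left (kern α u) 2⁻¹]
    norm_num
  have hint : Integrable (Function.uncurry fun u v => kern α u (2⁻¹ * v))
      (volume.prod volume) := by
    have h := (integrable_exp_neg_mul_abs' (by positivity : 0 < π / 2)).mul_prod
      (integrable_exp_neg_mul_abs' (by positivity : 0 < π / 2))
    refine h.mono' ?_ (Filter.Eventually.of_forall fun p => ?_)
    · have hg : Continuous fun p : ℝ × ℝ => (p.1, 2⁻¹ * p.2) := by fun_prop
      exact ((continuous_kern α).comp hg).aestronglyMeasurable
    · refine (abs_kern_le α p.1 (2⁻¹ * p.2)).trans (le_of_eq ?_)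
      rw [abs_mul, abs_of_pos (by norm_num : (0:ℝ) < 2⁻¹)]; ring_nf
  have hanti : ∀ u v, kern α u (2⁻¹ * v) = - kern α v (2⁻¹ * u) := by
    intro u v
    unfold kern
    rw [show 2 * α * ((2⁻¹ * v) ^ 2 - u ^ 2 / 4) = -(2 * α * ((2⁻¹ * u) ^ 2 - v ^ 2 / 4)) by ring,
      Real.sin_neg, show 2 * π * (2⁻¹ * v) = π * v by ring,
      show 2 * π * (2⁻¹ * u) = π * u by ring, add_comm, neg_div]
  have hswap := integral_integral_swap hint
  have h2 : ∫ v : ℝ, ∫ u : ℝ, kern α u (2⁻¹ * v) = - ∫ v : ℝ, ∫ u : ℝ, kern α v (2⁻¹ * u) := by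
    rw [← integral_neg]
    congr 1; ext v
    rw [← integral_neg]
    congr 1; ext u
    exact hanti u v
  rw [h2] at hswap
  simp only [hscale, integral_const_mul] at hswap
  linarith

theorem tendsto_integral_kern (α : ℝ) :
    Filter.Tendsto (fun T : ℝ => ∫ u : ℝ, ∫ y in (-T)..T, kern α u y) Filter.atTop (nhds 0) := by
  rw [← integral_kern_eq_zero α]
  have hslice : ∀ u, Integrable (kern α u) := fun u =>
    ((integrable_exp_neg_mul_abs' Real.pi_pos).const_mul (Real.exp (-(π / 2 * |u|)))).mono'
      (continuous_kern_right α u).aestronglyMeasurable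
      (Filter.Eventually.of_forall fun y => abs_kern_le α u y)
  refine tendsto_integral_filter_of_dominated_convergence
    (fun u => Real.exp (-(π / 2 * |u|)) * ∫ y : ℝ, Real.exp (-(π * |y|))) ?_ ?_ ?_ ?_
  · refine Filter.Eventually.of_forall fun T => Continuous.aestronglyMeasurable ?_
    exact intervalIntegral.continuous_parametric_intervalIntegral_of_continuous'
      (continuous_kern α) _ _
  · filter_upwards [Filter.eventually_ge_atTop (0:ℝ)] with T hT
    refine Filter.Eventually.of_forall fun u => ?_
    rw [intervalIntegral.integral_of_le (by linarith), ← integral_const_mul]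
    refine (norm_integral_le_integral_norm _).trans ?_
    refine (setIntegral_le_integral (hslice u).norm
      (Filter.Eventually.of_forall fun y => norm_nonneg _)).trans ?_
    exact integral_mono (hslice u).norm
      ((integrable_exp_neg_mul_abs' Real.pi_pos).const_mul _) fun y => abs_kern_le α u y
  · exact (integrable_exp_neg_mul_abs' (by positivity)).mul_const _
  · exact Filter.Eventually.of_forall fun u =>
      intervalIntegral_tendsto_integral (hslice u) Filter.tendsto_neg_atTop_atBot Filter.tendsto_id

/-! ### Oscillation over windows of fixed length -/

/-- Oscillation kills the integral over a window of fixed (signed) length `c` moving to infinity: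
integrate by parts against `-cos (2 α (y² - k))`, whose derivative has the large factor
`4 α y`. -/
theorem tendsto_window (α : ℝ) (hα : 0 < α) (a c k : ℝ) :
    Filter.Tendsto (fun T : ℝ => ∫ y in T..(T + c),
      Real.tanh (π * (y + a)) * Real.sin (2 * α * (y ^ 2 - k))) Filter.atTop (nhds 0) := by
  have hlim : Filter.Tendsto (fun T : ℝ => (2 + (π + 1) * |c|) / (4 * α) * (T - |c|)⁻¹)
      Filter.atTop (nhds 0) := by
    have : Filter.Tendsto (fun T : ℝ => (T - |c|)⁻¹) Filter.atTop (nhds 0) :=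
      tendsto_inv_atTop_zero.comp (Filter.tendsto_atTop_add_const_right _ _ Filter.tendsto_id)
    simpa using this.const_mul ((2 + (π + 1) * |c|) / (4 * α))
  refine squeeze_zero_norm' ?_ hlim
  filter_upwards [Filter.eventually_ge_atTop (|c| + 1)] with T hT
  have hm : 1 ≤ T - |c| := by linarith
  have hy : ∀ y ∈ Set.uIcc T (T + c), T - |c| ≤ y := by
    intro y hy
    have h1 := (Set.mem_uIcc.mp hy)
    have := neg_abs_le c
    rcases h1 with h | h <;> linarith [abs_nonneg c]
  have htanh : ∀ t : ℝ, |Real.tanh t| ≤ 1 := fun t => (Real.abs_tanh_lt_one t).le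
  -- `G` is the boundary term and `h` the remaining integrand of the integration by parts.
  set G : ℝ → ℝ := fun y =>
    -(Real.cos (2 * α * (y ^ 2 - k)) * (Real.tanh (π * (y + a)) / (4 * α * y))) with hG
  set h : ℝ → ℝ := fun y => Real.cos (2 * α * (y ^ 2 - k)) *
    (π * (1 / Real.cosh (π * (y + a)) ^ 2) / (4 * α * y)
      - Real.tanh (π * (y + a)) / (4 * α * y ^ 2)) with hh
  have hder : ∀ y ∈ Set.uIcc T (T + c), HasDerivAt G
      (Real.tanh (π * (y + a)) * Real.sin (2 * α * (y ^ 2 - k)) - h y) y := by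
    intro y hyy
    have hy0 : 0 < y := by linarith [hy y hyy]
    have d1 : HasDerivAt (fun y : ℝ => 2 * α * (y ^ 2 - k)) (2 * α * (2 * y)) y := by
      have := ((hasDerivAt_pow 2 y).sub_const k).const_mul (2 * α)
      simpa using this
    have d2 : HasDerivAt (fun y : ℝ => Real.tanh (π * (y + a)))
        (1 / Real.cosh (π * (y + a)) ^ 2 * (π * 1)) y :=
      (hasDerivAt_tanh' _).comp y (((hasDerivAt_id y).add_const a).const_mul π)
    have d3 : HasDerivAt (fun y : ℝ => 4 * α * y) (4 * α * 1) y := (hasDerivAt_id y).const_mul _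
    have d4 := (d1.cos.mul (d2.div d3 (by positivity))).neg
    refine d4.congr_deriv ?_
    simp only [hh, Pi.div_apply]
    field_simp
    ring
  have hcont : ContinuousOn h (Set.uIcc T (T + c)) := by
    intro y hyy
    have hy0 : 0 < y := by linarith [hy y hyy]
    have hc0 := (Real.cosh_pos (π * (y + a))).ne'
    apply ContinuousAt.continuousWithinAt
    refine ContinuousAt.mul (by fun_prop) (ContinuousAt.sub ?_ ?_)
    · refine ContinuousAt.div (ContinuousAt.mul (by fun_prop) (ContinuousAt.div (by fun_prop) (by fun_prop) (by positivity))) (by fun_prop) (by positivity)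
    · exact ContinuousAt.div (by fun_prop) (by fun_prop) (by positivity)
  have hfc : Continuous (fun y : ℝ => Real.tanh (π * (y + a)) * Real.sin (2 * α * (y ^ 2 - k))) := by
    fun_prop
  have hftc := intervalIntegral.integral_eq_sub_of_hasDerivAt hder
    ((hfc.intervalIntegrable _ _).sub hcont.intervalIntegrable)
  rw [intervalIntegral.integral_sub (hfc.intervalIntegrable _ _) hcont.intervalIntegrable] at hftc
  have hGb : ∀ y ∈ Set.uIcc T (T + c), |G y| ≤ 1 / (4 * α) * (T - |c|)⁻¹ := by
    intro y hyy
    have hyl := hy y hyy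
    have hy0 : 0 < y := by linarith
    rw [hG]
    simp only [abs_neg, abs_mul, abs_div]
    rw [abs_of_pos hy0, abs_of_pos hα, abs_of_pos (by norm_num : (0:ℝ) < 4)]
    calc _ ≤ 1 * (1 / (4 * α * y)) := by
          gcongr
          · exact Real.abs_cos_le_one _
          · exact htanh _
      _ = 1 / (4 * α) * y⁻¹ := by field_simp
      _ ≤ _ := by gcongr
  have hhb : ∀ y ∈ Set.uIoc T (T + c), ‖h y‖ ≤ (π + 1) / (4 * α) * (T - |c|)⁻¹ := by
    intro y hyy
    have hyl := hy y (Set.uIoc_subset_uIcc hyy)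
    have hy0 : 0 < y := by linarith
    have hy1 : 1 ≤ y := by linarith
    have hch := Real.one_le_cosh (π * (y + a))
    have hpi := Real.pi_pos
    rw [Real.norm_eq_abs, hh]
    simp only [abs_mul]
    calc _ ≤ 1 * (|π * (1 / Real.cosh (π * (y + a)) ^ 2) / (4 * α * y)|
          + |Real.tanh (π * (y + a)) / (4 * α * y ^ 2)|) := by
          gcongr
          · exact Real.abs_cos_le_one _
          · exact abs_sub _ _
      _ ≤ 1 * (π * 1 / (4 * α * y) + 1 / (4 * α * y)) := by
          have e1 : 1 / Real.cosh (π * (y + a)) ^ 2 ≤ 1 := by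
            rw [div_le_one (by positivity)]; nlinarith
          rw [abs_of_nonneg (by positivity : 0 ≤ π * (1 / Real.cosh (π * (y + a)) ^ 2) / (4 * α * y)),
            abs_div, abs_of_pos (by positivity : 0 < 4 * α * y ^ 2)]
          gcongr
          · exact htanh _
          · nlinarith
      _ = (π + 1) / (4 * α) * y⁻¹ := by field_simp
      _ ≤ _ := by gcongr
  have hI := intervalIntegral.norm_integral_le_of_norm_le_const hhb
  have hG1 := hGb T Set.left_mem_uIcc
  have hG2 := hGb (T + c) Set.right_mem_uIcc
  rw [Real.norm_eq_abs] at hI ⊢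
  rw [show T + c - T = c by ring] at hI
  have e : (∫ y in T..(T + c), Real.tanh (π * (y + a)) * Real.sin (2 * α * (y ^ 2 - k)))
      = G (T + c) - G T + ∫ y in T..(T + c), h y := by linarith
  rw [e]
  calc _ ≤ |G (T + c)| + |G T| + |∫ y in T..(T + c), h y| :=
        (abs_add_le _ _).trans (by gcongr; exact abs_sub _ _)
    _ ≤ 1 / (4 * α) * (T - |c|)⁻¹ + 1 / (4 * α) * (T - |c|)⁻¹
        + (π + 1) / (4 * α) * (T - |c|)⁻¹ * |c| := by gcongr
    _ = _ := by ring

/-! ### The inner integral -/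

/-- The function `tanh (π x) sin (2 α (x² + x u))` in the variable `y = x + u / 2`. -/
noncomputable def shifted (α u y : ℝ) : ℝ :=
  Real.tanh (π * (y - u / 2)) * Real.sin (2 * α * (y ^ 2 - u ^ 2 / 4))

theorem continuous_shifted (α : ℝ) : Continuous (Function.uncurry (shifted α)) := by
  unfold shifted Function.uncurry
  fun_prop

theorem continuous_shifted_right (α u : ℝ) : Continuous (shifted α u) := by
  unfold shifted
  fun_prop

theorem abs_shifted_le (α u y : ℝ) : |shifted α u y| ≤ 1 := by
  rw [shifted, abs_mul]
  exact mul_le_one₀ (Real.abs_tanh_lt_one _).le (abs_nonneg _) (Real.abs_sin_le_one _)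

/-- The even part in `y` of `shifted` carries the factor `sinh (π u)`. -/
theorem shifted_add_shifted_neg (α u y : ℝ) :
    shifted α u y + shifted α u (-y) = -2 * Real.sinh (π * u) * kern α u y := by
  have h1 := (Real.cosh_pos (2 * π * y))
  have h2 := (Real.cosh_pos (π * u))
  have hd : Real.cosh (2 * π * y) + Real.cosh (π * u) =
      2 * Real.cosh (π * (y - u / 2)) * Real.cosh (π * (y + u / 2)) := by
    rw [show 2 * π * y = π * (y - u / 2) + π * (y + u / 2) by ring,
      show π * u = π * (y + u / 2) - π * (y - u / 2) by ring, Real.cosh_add, Real.cosh_sub]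
    ring
  have hs : Real.sinh (π * u) = Real.sinh (π * (y + u / 2)) * Real.cosh (π * (y - u / 2))
      - Real.cosh (π * (y + u / 2)) * Real.sinh (π * (y - u / 2)) := by
    rw [← Real.sinh_sub]; ring_nf
  have h3 := (Real.cosh_pos (π * (y - u / 2))).ne'
  have h4 := (Real.cosh_pos (π * (y + u / 2))).ne'
  unfold shifted kern
  rw [hd, hs, show π * (-y - u / 2) = -(π * (y + u / 2)) by ring, Real.tanh_neg, neg_sq,
    Real.tanh_eq_sinh_div_cosh, Real.tanh_eq_sinh_div_cosh]
  field_simp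
  ring

theorem integral_symm_eq {f : ℝ → ℝ} (hf : Continuous f) (T : ℝ) :
    ∫ x in (-T)..T, f x = ∫ x in (0:ℝ)..T, (f x + f (-x)) := by
  have hf' : Continuous fun x => f (-x) := hf.comp continuous_neg
  rw [intervalIntegral.integral_add (hf.intervalIntegrable _ _) (hf'.intervalIntegrable _ _),
    intervalIntegral.integral_comp_neg, neg_zero, add_comm,
    intervalIntegral.integral_add_adjacent_intervals (hf.intervalIntegrable _ _)
      (hf.intervalIntegrable _ _)]

theorem integral_shifted_eq (α u T : ℝ) :
    ∫ y in (-T)..T, shifted α u y = - Real.sinh (π * u) * ∫ y in (-T)..T, kern α u y := by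
  have hc := continuous_shifted_right α u
  have hk := continuous_kern_right α u
  have heven : ∀ y, kern α u (-y) = kern α u y := by
    intro y; simp [kern]
  rw [integral_symm_eq hc, integral_symm_eq hk, ← intervalIntegral.integral_const_mul]
  congr 1; ext y
  rw [shifted_add_shifted_neg, heven]; ring

/-- The difference between the integrals of `shifted` over `(-T + u / 2, T + u / 2)` and over
`(-T, T)`. -/
noncomputable def edge (α T u : ℝ) : ℝ :=
  (∫ y in T..(T + u / 2), shifted α u y) - ∫ y in (-T)..(-T + u / 2), shifted α u y

/-- The inner integral after Fubini: product-to-sum formula, completion of the square, and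
restoration of the symmetric window. -/
theorem inner_integral_eq (α u T : ℝ) :
    ∫ x in (0:ℝ)..T, Real.tanh (π * x) * Real.sin (2 * (α * x) * u) * Real.cos (2 * α * x ^ 2) =
      (edge α T u - Real.sinh (π * u) * ∫ y in (-T)..T, kern α u y) / 2 := by
  have hc := continuous_shifted_right α u
  have hi : ∀ a b, IntervalIntegrable (shifted α u) volume a b := fun a b =>
    hc.intervalIntegrable a b
  have h1 : ∫ x in (0:ℝ)..T,
      Real.tanh (π * x) * Real.sin (2 * (α * x) * u) * Real.cos (2 * α * x ^ 2) =
      (∫ x in (-T)..T, shifted α u (x + u / 2)) / 2 := by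
    rw [integral_symm_eq (f := fun x => shifted α u (x + u / 2)) (by fun_prop), ← intervalIntegral.integral_div]
    congr 1; ext x
    unfold shifted
    rw [show 2 * α * ((x + u / 2) ^ 2 - u ^ 2 / 4) = 2 * α * x ^ 2 + 2 * (α * x) * u by ring,
      show 2 * α * ((-x + u / 2) ^ 2 - u ^ 2 / 4) = 2 * α * x ^ 2 - 2 * (α * x) * u by ring,
      show π * (-x + u / 2 - u / 2) = -(π * x) by ring,
      show π * (x + u / 2 - u / 2) = π * x by ring, Real.tanh_neg, Real.sin_add, Real.sin_sub]
    ring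
  rw [h1, intervalIntegral.integral_comp_add_right (shifted α u)]
  have h2 := intervalIntegral.integral_add_adjacent_intervals (hi (-T) (-T + u / 2))
    (hi (-T + u / 2) (T + u / 2))
  have h3 := intervalIntegral.integral_add_adjacent_intervals (hi (-T) T) (hi T (T + u / 2))
  have h4 := integral_shifted_eq α u T
  rw [edge]
  linarith

theorem abs_edge_le (α T u : ℝ) : |edge α T u| ≤ |u| := by
  have hb : ∀ a, |∫ y in a..(a + u / 2), shifted α u y| ≤ |u| / 2 := by
    intro a
    have := intervalIntegral.norm_integral_le_of_norm_le_const (a := a) (b := a + u / 2)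
      (f := shifted α u) (C := 1) (fun y _ => abs_shifted_le α u y)
    rw [Real.norm_eq_abs, add_sub_cancel_left, abs_div, one_mul] at this
    simpa using this
  rw [edge]
  have := abs_sub (∫ y in T..(T + u / 2), shifted α u y) (∫ y in (-T)..(-T + u / 2), shifted α u y)
  linarith [hb T, hb (-T)]

theorem continuous_edge (α T : ℝ) : Continuous (edge α T) := by
  unfold edge
  refine Continuous.sub ?_ ?_
  · exact intervalIntegral.continuous_parametric_intervalIntegral_of_continuous
      (continuous_shifted α) (by fun_prop)
  · exact intervalIntegral.continuous_parametric_intervalIntegral_of_continuous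
      (continuous_shifted α) (by fun_prop)

/-- The window at `T` is `(T, T + u / 2)`; the one at `-T` is reflected to `(T - u / 2, T)`. -/
theorem tendsto_edge (α : ℝ) (hα : 0 < α) (u : ℝ) :
    Filter.Tendsto (fun T => edge α T u) Filter.atTop (nhds 0) := by
  have h1 := tendsto_window α hα (-(u / 2)) (u / 2) (u ^ 2 / 4)
  have h2 := (tendsto_window α hα (u / 2) (u / 2) (u ^ 2 / 4)).comp
    (Filter.tendsto_atTop_add_const_right Filter.atTop (-(u / 2)) Filter.tendsto_id)
  have h := h1.add h2
  rw [add_zero] at h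
  refine h.congr fun T => ?_
  simp only [Function.comp, id, neg_add_cancel_right, edge, sub_eq_add_neg]
  congr 1
  have := intervalIntegral.integral_comp_neg (a := T + -(u / 2)) (b := T) (shifted α u)
  rw [neg_add, neg_neg] at this
  rw [← this, ← intervalIntegral.integral_neg]
  congr 1; ext y
  unfold shifted
  rw [show π * (-y - u / 2) = -(π * (y + u / 2)) by ring, Real.tanh_neg, neg_sq]
  ring_nf

/-! ### Fubini and the limit -/

/-- Insert the sine transform for `tanh (α x)` and exchange the order of integration. -/
theorem integral_eq_double (α T : ℝ) (hT : 0 ≤ T) :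
    ∫ x in (0:ℝ)..T, Real.tanh (π * x) * Real.tanh (α * x) * Real.cos (2 * α * x ^ 2) =
    ∫ u : ℝ, (∫ x in (0:ℝ)..T,
      Real.tanh (π * x) * Real.sin (2 * (α * x) * u) * Real.cos (2 * α * x ^ 2)) /
        Real.sinh (π * u) := by
  have hint : Integrable (Function.uncurry fun x u : ℝ =>
      Real.tanh (π * x) * Real.cos (2 * α * x ^ 2) *
        (Real.sin (2 * (α * x) * u) / Real.sinh (π * u)))
      ((volume.restrict (Set.Ioc 0 T)).prod volume) := by
    have h0 : Integrable (fun x : ℝ => |2 * (α * x)|) (volume.restrict (Set.Ioc 0 T)) :=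
      (Continuous.integrableOn_Ioc (by fun_prop))
    have h := h0.mul_prod (integrable_exp_neg_mul_abs' one_pos)
    refine h.mono' (Measurable.aestronglyMeasurable ?_) (Filter.Eventually.of_forall fun p => ?_)
    · have := continuous_tanh'.measurable
      unfold Function.uncurry
      fun_prop
    · simp only [Function.uncurry, Real.norm_eq_abs, one_mul]
      rw [abs_mul, abs_mul]
      calc _ ≤ 1 * 1 * (|2 * (α * p.1)| * Real.exp (-|p.2|)) := by
            gcongr
            · exact (Real.abs_tanh_lt_one _).le
            · exact Real.abs_cos_le_one _
            · exact sin_div_sinh_bound _ _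
        _ = _ := by ring
  rw [intervalIntegral.integral_of_le hT]
  have h1 : ∀ x : ℝ, Real.tanh (π * x) * Real.tanh (α * x) * Real.cos (2 * α * x ^ 2) =
      ∫ u : ℝ, Real.tanh (π * x) * Real.cos (2 * α * x ^ 2) *
        (Real.sin (2 * (α * x) * u) / Real.sinh (π * u)) := by
    intro x
    rw [integral_const_mul, integral_sin_div_sinh]; ring
  simp only [h1]
  rw [integral_integral_swap hint]
  congr 1; ext u
  rw [intervalIntegral.integral_of_le hT, ← integral_div]
  congr 1; ext x
  ring

theorem stmt_16 (α : ℝ) (hα : 0 < α) :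
    Filter.Tendsto
      (fun T : ℝ => ∫ x in (0:ℝ)..T, Real.tanh (π * x) * Real.tanh (α * x) * Real.cos (2 * α * x ^ 2))
      Filter.atTop (nhds 0) := by
  have hexp : Integrable (fun u : ℝ => Real.exp (-|u|)) := by
    simpa using integrable_exp_neg_mul_abs' one_pos
  have hedge_le : ∀ T u : ℝ, |edge α T u / Real.sinh (π * u)| ≤ Real.exp (-|u|) := by
    intro T u
    refine le_trans ?_ (sinh_weight_bound u)
    rw [abs_div, abs_div]
    exact div_le_div_of_nonneg_right (abs_edge_le α T u) (abs_nonneg _)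
  have hedge_meas : ∀ T : ℝ, AEStronglyMeasurable (fun u => edge α T u / Real.sinh (π * u)) := by
    intro T
    have := (continuous_edge α T).measurable
    exact Measurable.aestronglyMeasurable (by fun_prop)
  have hedge : Filter.Tendsto (fun T : ℝ => ∫ u : ℝ, edge α T u / Real.sinh (π * u))
      Filter.atTop (nhds 0) := by
    have h := tendsto_integral_filter_of_dominated_convergence (μ := volume) (l := Filter.atTop)
      (F := fun T u => edge α T u / Real.sinh (π * u)) (f := fun _ => (0:ℝ))
      (fun u : ℝ => Real.exp (-|u|)) (Filter.Eventually.of_forall hedge_meas)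
      (Filter.Eventually.of_forall fun T => Filter.Eventually.of_forall (hedge_le T)) hexp
      (Filter.Eventually.of_forall fun u => by
        simpa using (tendsto_edge α hα u).div_const (Real.sinh (π * u)))
    simpa using h
  have hlim := (hedge.sub (tendsto_integral_kern α)).div_const 2
  rw [sub_zero, zero_div] at hlim
  refine hlim.congr' ?_
  filter_upwards [Filter.eventually_ge_atTop (0:ℝ)] with T hT
  have hk : Integrable (fun u => ∫ y in (-T)..T, kern α u y) := by
    simp only [intervalIntegral.integral_of_le (by linarith : -T ≤ T)]
    have h := (integrable_kern α).mono_measure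
      (Measure.prod_mono le_rfl (Measure.restrict_le_self (s := Set.Ioc (-T) T)))
    exact h.integral_prod_left
  have he : Integrable (fun u => edge α T u / Real.sinh (π * u)) :=
    hexp.mono' (hedge_meas T) (Filter.Eventually.of_forall (hedge_le T))
  rw [integral_eq_double α T hT, ← integral_sub he hk, ← integral_div]
  refine integral_congr_ae ?_
  filter_upwards [compl_mem_ae_iff.mpr (measure_singleton (0:ℝ))] with u hu
  have hs : Real.sinh (π * u) ≠ 0 := by
    rw [Real.sinh_ne_zero]
    exact mul_ne_zero Real.pi_ne_zero hu
  simp only [inner_integral_eq]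
  field_simp
end

section
/- The identity √2 · ∫₀^∞ ∫₀^∞ cos(x² y²/π) / (cosh(x²) cosh(y²)) dx dy = ( ∫₀^∞ cosh(x²/2)/cosh(x²) dx )² holds. -/
/-!
Put `K t u = cosh (t/2) cosh (u/2) / (cosh t + cosh u)` (`sechKer`). Two elementary identities
carry the proof:

* `sech ((t+u)/2) + sech ((t-u)/2) = 4 K t u`, so the Fourier transform of `sech` gives
  `∫₀^∞ cos (t v/π) cos (u v/π) sech v dv = π K t u`;
* `(sech t + sech u) K t u = φ t φ u` with `φ t = cosh (t/2) / cosh t`.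

Integrating the first over `t = z²` and using the Fresnel integral
`∫₀^∞ cos (z² v/π) dz = π / (2 √(2 v))` yields
`√2 ∫₀^∞ K (z²) u dz = ∫₀^∞ cos (u y²/π) sech (y²) dy` (`integral_sechKer`); the conditionally
convergent Fresnel integral is handled with a Gaussian factor `exp (-ε z²)` and `ε → 0⁺`.
Hence the left side of the theorem is `2 ∫∫ sech (x²) K (z²) (x²) dz dx`. As `K` is symmetric,
this equals `∫∫ (sech (x²) + sech (z²)) K (z²) (x²) dz dx`, which by the second identity is
`(∫ φ (x²) dx)²`.

The Fourier transform of `sech` is Euler's reflection formula `B(s, 1-s) = π / sin (π s)` at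
`s = 1/2 + i b`, after the substitution `x = 1 / (1 + e^{-v})` in the Beta integral.
-/

open Real MeasureTheory

/-! ### The Fourier transform of the hyperbolic secant -/

/-- The Fourier transform of `sech (v / 2) / 2`: the Beta integral `B(s, 1 - s)`, `s = 1/2 + i b`,
under the sigmoid substitution. -/
lemma integral_cexp_div_cosh_half (b : ℝ) :
    ∫ v : ℝ, Complex.exp (b * v * Complex.I) / (2 * Real.cosh (v / 2) : ℝ)
      = π / Real.cosh (π * b) := by
  have himg : Real.sigmoid '' Set.univ = Set.Ioo 0 1 := by
    rw [Set.image_univ, Real.range_sigmoid]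
  set s : ℂ := 1 / 2 + b * Complex.I with hs
  have hcv := integral_image_eq_integral_abs_deriv_smul (s := Set.univ) MeasurableSet.univ
    (fun x _ => (Real.hasDerivAt_sigmoid x).hasDerivWithinAt) Real.sigmoid_injective.injOn
    (fun x : ℝ => (x : ℂ) ^ (s - 1) * (1 - (x : ℂ)) ^ ((1 - s) - 1))
  rw [himg, ← integral_Ioc_eq_integral_Ioo, ← intervalIntegral.integral_of_le zero_le_one,
    ← Complex.betaIntegral, setIntegral_univ] at hcv
  have hre : s.re = 1 / 2 := by simp [hs]
  have hB := Complex.Gamma_mul_Gamma_eq_betaIntegral (s := s) (t := 1 - s)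
    (by rw [hre]; norm_num) (by rw [Complex.sub_re, hre]; norm_num)
  rw [Complex.Gamma_mul_Gamma_one_sub, add_sub_cancel, Complex.Gamma_one, one_mul, hcv] at hB
  have hsin : Complex.sin (π * s) = Real.cosh (π * b) := by
    have : (π : ℂ) * s = ((π * b : ℝ) : ℂ) * Complex.I + π / 2 := by
      rw [hs]; push_cast; ring
    rw [this, Complex.sin_add_pi_div_two, Complex.cos_mul_I, Complex.ofReal_cosh]
  rw [hsin] at hB
  rw [hB]
  congr 1
  ext v
  have hx := Real.sigmoid_pos v
  have hx1 : 0 < 1 - Real.sigmoid v := sub_pos.2 (Real.sigmoid_lt_one v)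
  -- The integrand becomes an exponential once `log x` and `log (1 - x)`, `x = sigmoid v`, are
  -- found from their difference `v` and their sum.
  have hLM : Real.log (Real.sigmoid v) - Real.log (1 - Real.sigmoid v) = v := by
    rw [← Real.sigmoid_neg, ← Real.sigmoid_mul_rexp_neg, Real.log_mul hx.ne' (exp_ne_zero _),
      Real.log_exp]
    ring
  have hsq : Real.sigmoid v * (1 - Real.sigmoid v) = (1 / (2 * Real.cosh (v / 2))) ^ 2 := by
    rw [← Real.sigmoid_neg, Real.sigmoid_def, Real.sigmoid_def, Real.cosh_eq, neg_neg]
    have e1 : rexp v = rexp (v / 2) ^ 2 := by rw [← Real.exp_nat_mul]; congr 1; push_cast; ring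
    have e2 : rexp (-v) = (rexp (v / 2) ^ 2)⁻¹ := by rw [Real.exp_neg, e1]
    rw [e2, e1, Real.exp_neg]
    have := Real.exp_pos (v / 2)
    field_simp
    ring
  have hc : 0 < 2 * Real.cosh (v / 2) := by positivity
  have hsum : Real.log (Real.sigmoid v) + Real.log (1 - Real.sigmoid v)
      = 2 * Real.log (1 / (2 * Real.cosh (v / 2))) := by
    rw [← Real.log_mul hx.ne' hx1.ne', hsq, Real.log_pow]; norm_num
  have hprod : rexp (Real.log (Real.sigmoid v)) * rexp (Real.log (1 - Real.sigmoid v))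
      = Real.sigmoid v * (1 - Real.sigmoid v) := by rw [Real.exp_log hx, Real.exp_log hx1]
  rw [abs_of_pos (mul_pos hx hx1), ← hprod, Complex.real_smul, ← Complex.ofReal_one,
    ← Complex.ofReal_sub, Complex.cpow_def_of_ne_zero (by exact_mod_cast hx.ne'),
    Complex.cpow_def_of_ne_zero (by exact_mod_cast hx1.ne'), ← Complex.ofReal_log hx.le,
    ← Complex.ofReal_log hx1.le]
  have hinv : (((2 * Real.cosh (v / 2) : ℝ) : ℂ))⁻¹
      = Complex.exp ((Real.log (1 / (2 * Real.cosh (v / 2))) : ℝ) : ℂ) := by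
    rw [← Complex.ofReal_exp, Real.exp_log (by positivity)]; push_cast; simp
  rw [div_eq_mul_inv, hinv]
  push_cast
  rw [← Complex.exp_add, ← Complex.exp_add, ← Complex.exp_add, ← Complex.exp_add]
  congr 1
  have h1 : (Real.log (Real.sigmoid v) : ℂ) = Real.log (1 / (2 * Real.cosh (v / 2))) + v / 2 := by
    have : Real.log (Real.sigmoid v) = Real.log (1 / (2 * Real.cosh (v / 2))) + v / 2 := by linarith
    rw [this]; push_cast; ring
  have h2 : (Real.log (1 - Real.sigmoid v) : ℂ)
      = Real.log (1 / (2 * Real.cosh (v / 2))) - v / 2 := by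
    have : Real.log (1 - Real.sigmoid v) = Real.log (1 / (2 * Real.cosh (v / 2))) - v / 2 := by
      linarith
    rw [this]; push_cast; ring
  rw [h1, h2, hs]
  ring

lemma inv_cosh_le (v : ℝ) : 1 / Real.cosh v ≤ 2 * rexp (-v) := by
  rw [div_le_iff₀ (Real.cosh_pos v), Real.cosh_eq]
  have h := Real.exp_pos (-v)
  have h2 : rexp (-v) * rexp v = 1 := by rw [← Real.exp_add]; simp
  nlinarith

lemma integrableOn_inv_cosh : IntegrableOn (fun v : ℝ => 1 / Real.cosh v) (Set.Ioi 0) := by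
  refine Integrable.mono' ((exp_neg_integrableOn_Ioi 0 one_pos).const_mul 2) ?_ ?_
  · exact (continuous_const.div Real.continuous_cosh
      fun x => (Real.cosh_pos x).ne').aestronglyMeasurable
  · refine Filter.Eventually.of_forall fun v => ?_
    rw [Real.norm_of_nonneg (by positivity)]
    simpa using inv_cosh_le v

lemma integral_cos_div_cosh (a : ℝ) :
    ∫ v in Set.Ioi (0 : ℝ), Real.cos (a * v) / Real.cosh v = π / 2 / Real.cosh (π * a / 2) := by
  have h := integral_cexp_div_cosh_half (a / 2)
  have h2 := Measure.integral_comp_mul_left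
    (fun v : ℝ => Complex.exp ((a / 2 : ℝ) * v * Complex.I) / (2 * Real.cosh (v / 2) : ℝ)) 2
  rw [h] at h2
  have hinv : Integrable (fun v : ℝ => 1 / Real.cosh v) := by
    refine Integrable.mono' (integrable_inv_one_add_sq.const_mul 4) ?_ ?_
    · exact (continuous_const.div Real.continuous_cosh
        fun x => (Real.cosh_pos x).ne').aestronglyMeasurable
    · refine Filter.Eventually.of_forall fun v => ?_
      rw [Real.norm_of_nonneg (by positivity), ← Real.cosh_abs, ← div_eq_mul_inv,
        div_le_div_iff₀ (Real.cosh_pos _) (by positivity), Real.cosh_eq]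
      have h1 := Real.quadratic_le_exp_of_nonneg (abs_nonneg v)
      have h2 := Real.exp_pos (-|v|)
      rw [sq_abs] at h1
      nlinarith [abs_nonneg v]
  have hint : Integrable (fun v : ℝ => Complex.exp ((a / 2 : ℝ) * ((2 * v : ℝ) : ℂ) * Complex.I)
      / (2 * Real.cosh (2 * v / 2) : ℝ)) := by
    refine Integrable.mono' hinv (Continuous.aestronglyMeasurable ?_) ?_
    · refine Continuous.div (by fun_prop) (by fun_prop) fun v => ?_
      exact_mod_cast (mul_pos two_pos (Real.cosh_pos _)).ne'
    · refine Filter.Eventually.of_forall fun v => ?_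
      have := Real.cosh_pos v
      rw [norm_div, ← Complex.ofReal_mul, Complex.norm_exp_ofReal_mul_I, Complex.norm_real,
        mul_div_cancel_left₀ v two_ne_zero, Real.norm_of_nonneg (by positivity)]
      gcongr
      linarith
  have h3 := congrArg Complex.re h2
  have h4 : (∫ v : ℝ, Complex.exp ((a / 2 : ℝ) * ((2 * v : ℝ) : ℂ) * Complex.I)
      / (2 * Real.cosh (2 * v / 2) : ℝ)).re = ∫ v : ℝ, Real.cos (a * v) / Real.cosh v / 2 := by
    rw [← RCLike.re_eq_complex_re, ← integral_re hint]
    congr 1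
    ext v
    rw [RCLike.re_eq_complex_re, Complex.div_ofReal_re, ← Complex.ofReal_mul,
      Complex.exp_ofReal_mul_I_re, mul_div_cancel_left₀ v two_ne_zero, div_div,
      mul_comm 2 (Real.cosh v)]
    congr 2
    ring
  rw [h4, integral_div] at h3
  have h5 := integral_comp_abs (f := fun v => Real.cos (a * v) / Real.cosh v)
  have h6 : (fun v : ℝ => Real.cos (a * |v|) / Real.cosh |v|)
      = fun v => Real.cos (a * v) / Real.cosh v := by
    ext v
    rw [Real.cosh_abs]
    rcases abs_choice v with h | h <;> rw [h]
    rw [mul_neg, Real.cos_neg]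
  rw [h6] at h5
  have h7 : (|(2 : ℝ)⁻¹| • ((π : ℂ) / (Real.cosh (π * (a / 2)) : ℂ))).re
      = π / Real.cosh (π * a / 2) / 2 := by
    rw [Complex.smul_re, ← Complex.ofReal_div, Complex.ofReal_re, smul_eq_mul, abs_of_pos (by norm_num),
      mul_div_assoc]
    ring
  rw [h7] at h3
  rw [div_right_comm]
  linarith

open Filter Topology

/-! ### The kernel `K` and its cosine representation -/

/-- The kernel `K t u = cosh (t/2) cosh (u/2) / (cosh t + cosh u)`, half the mean of
`sech ((t+u)/2)` and `sech ((t-u)/2)`. -/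
noncomputable def sechKer (t u : ℝ) : ℝ :=
  Real.cosh (t / 2) * Real.cosh (u / 2) / (Real.cosh t + Real.cosh u)

lemma continuous_sechKer : Continuous fun p : ℝ × ℝ => sechKer p.1 p.2 := by
  unfold sechKer
  refine Continuous.div (by fun_prop) (by fun_prop) fun p => ?_
  have := Real.cosh_pos p.1
  have := Real.cosh_pos p.2
  positivity

lemma sechKer_nonneg (t u : ℝ) : 0 ≤ sechKer t u := by unfold sechKer; positivity

lemma inv_cosh_add_inv_cosh (t u : ℝ) :
    1 / Real.cosh ((t + u) / 2) + 1 / Real.cosh ((t - u) / 2) = 4 * sechKer t u := by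
  set a := (t + u) / 2 with ha
  set b := (t - u) / 2 with hb
  have e1 : Real.cosh t + Real.cosh u = 2 * (Real.cosh a * Real.cosh b) := by
    rw [show t = a + b by rw [ha, hb]; ring, show u = a - b by rw [ha, hb]; ring,
      Real.cosh_add, Real.cosh_sub]
    ring
  have e2 : Real.cosh a + Real.cosh b = 2 * (Real.cosh (t / 2) * Real.cosh (u / 2)) := by
    rw [show a = t / 2 + u / 2 by rw [ha]; ring, show b = t / 2 - u / 2 by rw [hb]; ring,
      Real.cosh_add, Real.cosh_sub]
    ring
  have ha0 := Real.cosh_pos a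
  have hb0 := Real.cosh_pos b
  unfold sechKer
  rw [e1]
  field_simp
  linarith

lemma integral_cos_mul_cos_div_cosh (t u : ℝ) :
    ∫ v in Set.Ioi (0 : ℝ), Real.cos (t * v / π) * (Real.cos (u * v / π) / Real.cosh v)
      = π * sechKer t u := by
  have hi (a : ℝ) : IntegrableOn (fun v => Real.cos (a * v) / Real.cosh v) (Set.Ioi 0) := by
    refine Integrable.mono' integrableOn_inv_cosh ?_ ?_
    · exact (Continuous.div (by fun_prop) (by fun_prop)
        fun x => (Real.cosh_pos x).ne').aestronglyMeasurable
    · refine Eventually.of_forall fun v => ?_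
      rw [norm_div, Real.norm_of_nonneg (Real.cosh_pos v).le]
      gcongr
      exact Real.abs_cos_le_one _
  have h : ∀ v : ℝ, Real.cos (t * v / π) * (Real.cos (u * v / π) / Real.cosh v)
      = (Real.cos ((t + u) / π * v) / Real.cosh v + Real.cos ((t - u) / π * v) / Real.cosh v) / 2 := by
    intro v
    have e1 : (t + u) / π * v = t * v / π + u * v / π := by ring
    have e2 : (t - u) / π * v = t * v / π - u * v / π := by ring
    rw [e1, e2, Real.cos_add, Real.cos_sub]
    ring
  simp_rw [h]
  rw [integral_div, integral_add (hi _) (hi _), integral_cos_div_cosh, integral_cos_div_cosh]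
  have e (x : ℝ) : π * (x / π) / 2 = x / 2 := by field_simp
  rw [e, e]
  linear_combination π / 4 * inv_cosh_add_inv_cosh t u

/-! ### Regularised Fresnel integrals -/

/-- The regularised Fresnel integral `∫₀^∞ exp (-ε z²) cos (z² v/π) dz`, `ε > 0`, in closed form,
`½ Re √(π / (ε - i v/π))` with the principal square root. -/
noncomputable def fres (ε v : ℝ) : ℝ :=
  (((π : ℂ) / (ε - (v / π : ℝ) * Complex.I)) ^ (2⁻¹ : ℂ)).re / 2

lemma integral_gaussian_mul_cos {ε : ℝ} (hε : 0 < ε) (v : ℝ) :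
    ∫ z in Set.Ioi (0 : ℝ), rexp (-ε * z ^ 2) * Real.cos (z ^ 2 * v / π) = fres ε v := by
  have hre : 0 < ((ε : ℂ) - (v / π : ℝ) * Complex.I).re := by simpa using hε
  have hg := integral_gaussian_complex_Ioi hre
  have hint := (integrable_cexp_neg_mul_sq hre).integrableOn (s := Set.Ioi 0)
  have hr := congrArg Complex.re hg
  rw [← RCLike.re_eq_complex_re, ← integral_re hint] at hr
  rw [fres, ← one_div (2 : ℂ)]
  convert hr using 1
  · congr 1
    ext z
    have : -((ε : ℂ) - (v / π : ℝ) * Complex.I) * (z : ℂ) ^ 2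
        = ((-ε * z ^ 2 : ℝ) : ℂ) + ((z ^ 2 * v / π : ℝ) : ℂ) * Complex.I := by
      push_cast; ring
    rw [this, RCLike.re_eq_complex_re, Complex.exp_add, ← Complex.ofReal_exp,
      Complex.re_ofReal_mul, Complex.exp_ofReal_mul_I_re]
  · rw [RCLike.re_eq_complex_re]
    exact (Complex.div_ofNat_re _ 2).symm

/-- A bound uniform in `ε`, integrable in `v` against `sech v`. -/
lemma abs_fres_le {ε v : ℝ} (hv : 0 < v) : |fres ε v| ≤ π * v ^ (-(1 / 2) : ℝ) := by
  have h1 : |fres ε v| ≤ ‖(π : ℂ) / (ε - (v / π : ℝ) * Complex.I)‖ ^ (1 / 2 : ℝ) := by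
    rw [fres, abs_div, abs_two]
    have h := Complex.abs_re_le_norm (((π : ℂ) / (ε - (v / π : ℝ) * Complex.I)) ^ (2⁻¹ : ℂ))
    have e : (2⁻¹ : ℂ) = ((1 / 2 : ℝ) : ℂ) := by norm_num
    have h2 := Complex.norm_cpow_real ((π : ℂ) / (ε - (v / π : ℝ) * Complex.I)) (1 / 2)
    rw [← e] at h2
    rw [h2] at h
    have := abs_nonneg (((π : ℂ) / (ε - (v / π : ℝ) * Complex.I)) ^ (2⁻¹ : ℂ)).re
    linarith
  refine h1.trans ?_
  have h3 : v / π ≤ ‖(ε : ℂ) - (v / π : ℝ) * Complex.I‖ := by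
    have := Complex.abs_im_le_norm ((ε : ℂ) - (v / π : ℝ) * Complex.I)
    have e : ((ε : ℂ) - (v / π : ℝ) * Complex.I).im = -(v / π) := by simp
    rw [e, abs_neg, abs_of_pos (by positivity)] at this
    exact this
  have h4 : ‖(π : ℂ) / (ε - (v / π : ℝ) * Complex.I)‖ ≤ π ^ 2 / v := by
    rw [norm_div, Complex.norm_real, Real.norm_of_nonneg pi_pos.le]
    calc π / _ ≤ π / (v / π) := by gcongr
      _ = _ := by field_simp
  refine (Real.rpow_le_rpow (norm_nonneg _) h4 (by norm_num)).trans_eq ?_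
  rw [Real.div_rpow (by positivity) hv.le, ← Real.sqrt_eq_rpow, Real.sqrt_sq pi_pos.le,
    Real.rpow_neg hv.le, div_eq_mul_inv]

/-- The Fresnel integral `π / (2 √(2 v))` as the limit of its regularisations. -/
lemma tendsto_fres {v : ℝ} (hv : 0 < v) :
    Tendsto (fun ε => fres ε v) (𝓝[>] 0) (𝓝 (π / (2 * √2) * v ^ (-(1 / 2) : ℝ))) := by
  have hb : (0 : ℂ) - (v / π : ℝ) * Complex.I ≠ 0 := by
    intro h
    have := congrArg Complex.im h
    have hp : 0 < v / π := by positivity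
    rw [Complex.sub_im, Complex.im_ofReal_mul, Complex.I_im, Complex.zero_im] at this
    linarith
  -- `w` is the principal square root of `π² i / v`.
  set w : ℂ := ((π / √(2 * v) : ℝ) : ℂ) * (1 + Complex.I) with hw
  have hw2 : (π : ℂ) / ((0 : ℂ) - (v / π : ℝ) * Complex.I) = w ^ 2 := by
    rw [div_eq_iff hb, hw]
    have h1 : (π / √(2 * v)) ^ 2 = π ^ 2 / (2 * v) := by
      rw [div_pow, Real.sq_sqrt (by positivity)]
    have h2 : (1 + Complex.I) ^ 2 = 2 * Complex.I := by
      linear_combination Complex.I_sq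
    rw [mul_pow, ← Complex.ofReal_pow, h1, h2]
    have hvc : (v : ℂ) ≠ 0 := by exact_mod_cast hv.ne'
    have hpc : (π : ℂ) ≠ 0 := by exact_mod_cast pi_ne_zero
    push_cast
    field_simp
    linear_combination (v : ℂ) * Complex.I_sq
  have hwre : w.re = π / √(2 * v) := by
    rw [hw, Complex.re_ofReal_mul]; simp
  have hlim : fres 0 v = π / (2 * √2) * v ^ (-(1 / 2) : ℝ) := by
    rw [fres, Complex.ofReal_zero, hw2, Complex.sq_cpow_two_inv (by rw [hwre]; positivity), hwre,
      Real.sqrt_mul zero_le_two, Real.rpow_neg hv.le, ← Real.sqrt_eq_rpow]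
    field_simp
  rw [← hlim]
  have hs : (π : ℂ) / ((0 : ℝ) - (v / π : ℝ) * Complex.I) ∈ Complex.slitPlane := by
    right
    rw [Complex.ofReal_zero, hw2]
    have : (w ^ 2).im = 2 * (π / √(2 * v)) ^ 2 := by
      rw [hw, mul_pow, ← Complex.ofReal_pow, Complex.im_ofReal_mul]
      simp [sq]
      ring
    rw [this]
    positivity
  have hc : ContinuousAt (fun ε => fres ε v) 0 := by
    unfold fres
    refine ContinuousAt.div_const (Complex.continuous_re.continuousAt.comp ?_) 2
    refine ContinuousAt.cpow ?_ continuousAt_const hs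
    refine continuousAt_const.div (by fun_prop) ?_
    simpa using hb
  exact hc.tendsto.mono_left nhdsWithin_le_nhds

/-! ### Integrals of the kernel and symmetrisation -/

/-- Symmetrising `sech t * K t u` in `t` and `u` separates the variables. -/
lemma inv_cosh_mul_sechKer (t u : ℝ) :
    1 / Real.cosh t * sechKer t u + 1 / Real.cosh u * sechKer t u
      = Real.cosh (t / 2) / Real.cosh t * (Real.cosh (u / 2) / Real.cosh u) := by
  have := Real.cosh_pos t
  have := Real.cosh_pos u
  unfold sechKer
  field_simp
  ring

lemma integrableOn_cosh_half_div :
    IntegrableOn (fun x : ℝ => Real.cosh (x ^ 2 / 2) / Real.cosh (x ^ 2)) (Set.Ioi 0) := by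
  have h := ((integrable_exp_neg_mul_sq (b := 1 / 2) (by norm_num)).const_mul 2).integrableOn
    (s := Set.Ioi 0)
  refine Integrable.mono' h ?_ ?_
  · exact (Continuous.div (by fun_prop) (by fun_prop)
      fun x => (Real.cosh_pos _).ne').aestronglyMeasurable
  · refine Eventually.of_forall fun x => ?_
    rw [Real.norm_of_nonneg (by positivity)]
    have h1 : Real.cosh (x ^ 2 / 2) ≤ rexp (x ^ 2 / 2) := by
      have : rexp (-(x ^ 2 / 2)) ≤ rexp (x ^ 2 / 2) := Real.exp_le_exp.2 (by nlinarith [sq_nonneg x])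
      rw [Real.cosh_eq]
      linarith
    have h2 : rexp (-(1 / 2) * x ^ 2) = rexp (x ^ 2 / 2) * rexp (-x ^ 2) := by
      rw [← Real.exp_add]; congr 1; ring
    calc Real.cosh (x ^ 2 / 2) / Real.cosh (x ^ 2)
        = Real.cosh (x ^ 2 / 2) * (1 / Real.cosh (x ^ 2)) := by ring
      _ ≤ rexp (x ^ 2 / 2) * (2 * rexp (-x ^ 2)) := by
        gcongr
        exact inv_cosh_le _
      _ = 2 * rexp (-(1 / 2) * x ^ 2) := by rw [h2]; ring

lemma integrableOn_sechKer (u : ℝ) :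
    IntegrableOn (fun z : ℝ => sechKer (z ^ 2) u) (Set.Ioi 0) := by
  refine Integrable.mono' (integrableOn_cosh_half_div.const_mul (Real.cosh (u / 2))) ?_ ?_
  · exact (continuous_sechKer.comp (by fun_prop : Continuous fun z : ℝ =>
      (z ^ 2, u))).aestronglyMeasurable
  · refine Eventually.of_forall fun z => ?_
    rw [Real.norm_of_nonneg (sechKer_nonneg _ _), sechKer, mul_comm, mul_div_assoc]
    gcongr
    linarith [Real.cosh_pos u]

/-- Fubini applied to the cosine representation of `K (z²) u`, damped by `exp (-ε z²)`. -/
lemma integral_exp_mul_sechKer (u : ℝ) {ε : ℝ} (hε : 0 < ε) :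
    ∫ z in Set.Ioi (0 : ℝ), rexp (-ε * z ^ 2) * (π * sechKer (z ^ 2) u)
      = ∫ v in Set.Ioi (0 : ℝ), fres ε v * (Real.cos (u * v / π) / Real.cosh v) := by
  simp_rw [← integral_cos_mul_cos_div_cosh, ← integral_const_mul]
  rw [integral_integral_swap]
  · simp_rw [← mul_assoc, integral_mul_const, integral_gaussian_mul_cos hε]
  · have h := ((integrable_exp_neg_mul_sq hε).integrableOn (s := Set.Ioi 0)).mul_prod
      integrableOn_inv_cosh
    refine Integrable.mono' h ?_ ?_
    · refine Continuous.aestronglyMeasurable ?_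
      simp only [Function.uncurry_def]
      refine Continuous.mul (by fun_prop) (Continuous.mul (by fun_prop) ?_)
      exact Continuous.div (by fun_prop) (by fun_prop) fun p => (Real.cosh_pos _).ne'
    · refine Eventually.of_forall fun p => ?_
      simp only [Function.uncurry_def]
      rw [norm_mul, norm_mul, norm_div, Real.norm_of_nonneg (Real.exp_pos _).le,
        Real.norm_of_nonneg (Real.cosh_pos _).le]
      gcongr
      rw [mul_div_assoc', ← one_mul (1 : ℝ)]
      gcongr
      · exact Real.abs_cos_le_one _
      · exact Real.abs_cos_le_one _

/-- The regularised identity `integral_exp_mul_sechKer` in the limit `ε → 0⁺`, followed by the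
substitution `v = y²`. -/
lemma integral_sechKer (u : ℝ) :
    √2 * ∫ z in Set.Ioi (0 : ℝ), sechKer (z ^ 2) u
      = ∫ y in Set.Ioi (0 : ℝ), Real.cos (u * y ^ 2 / π) / Real.cosh (y ^ 2) := by
  have hL : Tendsto (fun ε : ℝ => ∫ z in Set.Ioi (0 : ℝ), rexp (-ε * z ^ 2) *
      (π * sechKer (z ^ 2) u)) (𝓝[>] 0) (𝓝 (∫ z in Set.Ioi (0 : ℝ), π * sechKer (z ^ 2) u)) := by
    refine tendsto_integral_filter_of_dominated_convergence
      (fun z => π * sechKer (z ^ 2) u) ?_ ?_ ((integrableOn_sechKer u).const_mul π) ?_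
    · refine Eventually.of_forall fun ε => Continuous.aestronglyMeasurable ?_
      exact Continuous.mul (by fun_prop) (continuous_const.mul
        (continuous_sechKer.comp (by fun_prop : Continuous fun z : ℝ => (z ^ 2, u))))
    · filter_upwards [self_mem_nhdsWithin] with ε hε
      refine Eventually.of_forall fun z => ?_
      have h0 := sechKer_nonneg (z ^ 2) u
      rw [Real.norm_of_nonneg (by positivity)]
      refine mul_le_of_le_one_left (by positivity) (Real.exp_le_one_iff.2 ?_)
      have : 0 < ε := hε
      nlinarith [sq_nonneg z]
    · refine Eventually.of_forall fun z => ?_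
      have : Continuous fun ε : ℝ => rexp (-ε * z ^ 2) * (π * sechKer (z ^ 2) u) := by fun_prop
      simpa using (this.tendsto 0).mono_left nhdsWithin_le_nhds
  have hR : Tendsto (fun ε : ℝ => ∫ v in Set.Ioi (0 : ℝ), fres ε v *
      (Real.cos (u * v / π) / Real.cosh v)) (𝓝[>] 0)
      (𝓝 (∫ v in Set.Ioi (0 : ℝ), π / (2 * √2) * v ^ (-(1 / 2) : ℝ) *
        (Real.cos (u * v / π) / Real.cosh v))) := by
    have hbound := (Real.GammaIntegral_convergent (s := 1 / 2) (by norm_num)).const_mul (2 * π)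
    refine tendsto_integral_filter_of_dominated_convergence _ ?_ ?_ hbound ?_
    · refine Eventually.of_forall fun ε => Measurable.aestronglyMeasurable ?_
      unfold fres
      fun_prop
    · refine Eventually.of_forall fun ε => ?_
      filter_upwards [ae_restrict_mem measurableSet_Ioi] with v hv
      have hv : 0 < v := hv
      rw [norm_mul, norm_div, Real.norm_of_nonneg (Real.cosh_pos _).le]
      calc _ ≤ π * v ^ (-(1 / 2) : ℝ) * (1 / Real.cosh v) := by
            gcongr
            · exact abs_fres_le hv
            · exact Real.abs_cos_le_one _
        _ ≤ π * v ^ (-(1 / 2) : ℝ) * (2 * rexp (-v)) := by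
            gcongr
            exact inv_cosh_le v
        _ = _ := by
            rw [show (1 / 2 - 1 : ℝ) = -(1 / 2) by norm_num]
            ring
    · filter_upwards [ae_restrict_mem measurableSet_Ioi] with v hv
      exact (tendsto_fres hv).mul_const _
  have heq := tendsto_nhds_unique (hL.congr' (by
    filter_upwards [self_mem_nhdsWithin] with ε hε
    exact integral_exp_mul_sechKer u hε)) hR
  rw [integral_const_mul] at heq
  have hs : ∫ x in Set.Ioi (0 : ℝ), ((2 : ℝ) * x ^ ((2 : ℝ) - 1)) •
      (π / (2 * √2) * (x ^ (2 : ℝ)) ^ (-(1 / 2) : ℝ) *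
        (Real.cos (u * x ^ (2 : ℝ) / π) / Real.cosh (x ^ (2 : ℝ))))
      = ∫ y in Set.Ioi (0 : ℝ), π / √2 * (Real.cos (u * y ^ 2 / π) / Real.cosh (y ^ 2)) := by
    refine setIntegral_congr_fun measurableSet_Ioi fun x hx => ?_
    have hx : 0 < x := hx
    have h1 : (x ^ (2 : ℝ)) ^ (-(1 / 2) : ℝ) = x⁻¹ := by
      rw [← Real.rpow_mul hx.le, ← Real.rpow_neg_one]; norm_num
    have h2 : x ^ ((2 : ℝ) - 1) = x := by norm_num
    simp only [smul_eq_mul]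
    rw [h1, h2]
    simp only [Real.rpow_two]
    field_simp
  have hsub := (integral_comp_rpow_Ioi_of_pos (g := fun v : ℝ => π / (2 * √2) *
    v ^ (-(1 / 2) : ℝ) * (Real.cos (u * v / π) / Real.cosh v)) two_pos).symm.trans hs
  rw [hsub, integral_const_mul] at heq
  have h2 : (0 : ℝ) < √2 := by positivity
  have hp := pi_pos
  field_simp at heq
  linarith

theorem stmt_18 :
    Real.sqrt 2 *
      ∫ x in Set.Ioi (0:ℝ), ∫ y in Set.Ioi (0:ℝ),
        Real.cos (x ^ 2 * y ^ 2 / π) / (Real.cosh (x ^ 2) * Real.cosh (y ^ 2))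
      = (∫ x in Set.Ioi (0:ℝ), Real.cosh (x ^ 2 / 2) / Real.cosh (x ^ 2)) ^ 2 := by
  set μ : Measure ℝ := volume.restrict (Set.Ioi 0) with hμ
  set J : ℝ → ℝ → ℝ := fun x z => 1 / Real.cosh (x ^ 2) * sechKer (z ^ 2) (x ^ 2) with hJ
  have hinner (x : ℝ) : ∫ y,
      Real.cos (x ^ 2 * y ^ 2 / π) / (Real.cosh (x ^ 2) * Real.cosh (y ^ 2)) ∂μ
      = √2 * ∫ z, J x z ∂μ := by
    rw [hJ, integral_const_mul, mul_left_comm, hμ, integral_sechKer, ← integral_const_mul]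
    congr 1
    ext y
    rw [div_mul_div_comm, one_mul]
  simp_rw [hinner]
  rw [integral_const_mul, ← mul_assoc, Real.mul_self_sqrt zero_le_two]
  have hsum (x z : ℝ) : J x z + J z x = Real.cosh (x ^ 2 / 2) / Real.cosh (x ^ 2) *
      (Real.cosh (z ^ 2 / 2) / Real.cosh (z ^ 2)) := by
    have hsymm : sechKer (x ^ 2) (z ^ 2) = sechKer (z ^ 2) (x ^ 2) := by
      rw [sechKer, sechKer, mul_comm, add_comm]
    rw [← inv_cosh_mul_sechKer, hJ]
    simp only [hsymm]
  have hprod := integrableOn_cosh_half_div.mul_prod integrableOn_cosh_half_div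
  have hJ0 (x z : ℝ) : 0 ≤ J x z :=
    mul_nonneg (one_div_nonneg.2 (Real.cosh_pos _).le) (sechKer_nonneg _ _)
  have hJint : Integrable (Function.uncurry J) (μ.prod μ) := by
    refine Integrable.mono' hprod ?_ (Eventually.of_forall fun p => ?_)
    · refine Continuous.aestronglyMeasurable ?_
      simp only [Function.uncurry_def, hJ]
      refine Continuous.mul (Continuous.div (by fun_prop) (by fun_prop)
        fun p => (Real.cosh_pos _).ne') ?_
      exact continuous_sechKer.comp (by fun_prop : Continuous fun p : ℝ × ℝ => (p.2 ^ 2, p.1 ^ 2))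
    · rw [← hsum, Function.uncurry_def, Real.norm_of_nonneg (hJ0 _ _)]
      linarith [hJ0 p.2 p.1]
  have hadd := integral_add hJint hJint.swap
  have hmul := integral_prod_mul (μ := μ) (ν := μ)
    (fun x : ℝ => Real.cosh (x ^ 2 / 2) / Real.cosh (x ^ 2))
    (fun x : ℝ => Real.cosh (x ^ 2 / 2) / Real.cosh (x ^ 2))
  have hcongr : (fun p : ℝ × ℝ => Function.uncurry J p + (Function.uncurry J ∘ Prod.swap) p)
      = fun p : ℝ × ℝ => Real.cosh (p.1 ^ 2 / 2) / Real.cosh (p.1 ^ 2) *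
        (Real.cosh (p.2 ^ 2 / 2) / Real.cosh (p.2 ^ 2)) := by
    ext p
    exact hsum p.1 p.2
  have hsw : ∫ p, (Function.uncurry J ∘ Prod.swap) p ∂(μ.prod μ)
      = ∫ p, Function.uncurry J p ∂(μ.prod μ) := integral_prod_swap _
  rw [hcongr, hmul, hsw, integral_prod _ hJint] at hadd
  simp only [Function.uncurry_apply_pair] at hadd
  rw [sq, hadd, two_mul]
end

section
/- The function f(x) = sinh(√π x) / (cosh(√(2π) x) − cos(√2 π)) is a self-reciprocal function of the second kind: for every real t, √(2/π) · ∫₀^∞ f(x) sin(t x) dx = f(t). -/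
/-!
The integral is evaluated in closed form. Write `α = √π`, `r = √2`, so that `√(2π) = r α`, and put
`θ = √2 π - π`, so that `cosh y - cos (√2 π) = cosh y + cos θ` with `0 < θ < π`. By evenness the
half-line integral is half of the integral over `ℝ`, and there `sinh (α x)` may be replaced by
`exp (α x)`; so it is the imaginary part of the integral of
`exp (s y) / (cosh y + cos θ)`, `y = r α x`, at `s = (α + i t) / (r α)`, for which `Re s = 1 / √2`.

For `0 < Re s < 1`, `|θ| < π` and `sin θ ≠ 0` this integral is `2π sin (θ s) / (sin θ sin (π s))`
(`integral_exp_div_cosh_add_cos`). By partial fractions it is a combination of the integrals of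
`exp (s z) / (exp z + 1)` over the horizontal lines `Im z = ±θ`. The strip `|Im z| < π` contains no
pole, so by Cauchy's theorem both lines may be moved to the real axis
(`integral_logisticKernel_shift`), where the logistic substitution turns the integral into the beta
integral `B(s, 1 - s) = π / sin (π s)` (`integral_logisticKernel_real`).

Finally `θ s = π - (π s - i α t)`, so the ratio of sines is
`cosh (α t) - i sinh (α t) cot (π s)`, and `Re cot (p + i y) = sin 2p / (cosh 2y - cos 2p)` produces
the same kernel again.
-/

open Real MeasureTheory

open Filter Topology

/-- The kernel `exp (s z) / (exp z + 1)`, with poles at the odd multiples of `π i`. -/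
noncomputable def logisticKernel (s z : ℂ) : ℂ := Complex.exp (s * z) / (Complex.exp z + 1)

/-- The kernel is at most `exp (σ x)` on the left and `exp ((σ - 1) x)` on the right. -/
lemma integrable_real_kernel {σ : ℝ} (h0 : 0 < σ) (h1 : σ < 1) :
    Integrable (fun x : ℝ => rexp (σ * x) / (rexp x + 1)) := by
  have hc : Continuous (fun x : ℝ => rexp (σ * x) / (rexp x + 1)) := by
    refine Continuous.div (by fun_prop) (by fun_prop) fun x => by positivity
  have hl : IntegrableOn (fun x : ℝ => rexp (σ * x) / (rexp x + 1)) (Set.Iic 0) := by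
    refine (integrableOn_exp_mul_Iic h0 0).mono' hc.aestronglyMeasurable ?_
    refine Eventually.of_forall fun x => ?_
    rw [Real.norm_of_nonneg (by positivity)]
    exact div_le_self (by positivity) (by linarith [Real.exp_pos x])
  have hr : IntegrableOn (fun x : ℝ => rexp (σ * x) / (rexp x + 1)) (Set.Ioi 0) := by
    refine (integrableOn_exp_mul_Ioi (a := σ - 1) (by linarith) 0).mono'
      hc.aestronglyMeasurable ?_
    refine Eventually.of_forall fun x => ?_
    rw [Real.norm_of_nonneg (by positivity), div_le_iff₀ (by positivity), mul_add, ← Real.exp_add]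
    have : (σ - 1) * x + x = σ * x := by ring
    rw [this]
    have := Real.exp_pos ((σ - 1) * x)
    linarith
  rw [← integrableOn_univ, ← Set.Iic_union_Ioi (a := (0:ℝ))]
  exact hl.union hr

lemma tendsto_real_kernel_atTop {σ : ℝ} (h1 : σ < 1) :
    Tendsto (fun x : ℝ => rexp (σ * x) / (rexp x + 1)) atTop (𝓝 0) := by
  have h : Tendsto (fun x : ℝ => rexp ((σ - 1) * x)) atTop (𝓝 0) :=
    Real.tendsto_exp_atBot.comp (tendsto_id.const_mul_atTop_of_neg (by linarith))
  refine squeeze_zero (fun x => by positivity) (fun x => ?_) h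
  rw [div_le_iff₀ (by positivity), mul_add, ← Real.exp_add]
  have : (σ - 1) * x + x = σ * x := by ring
  rw [this]
  have := Real.exp_pos ((σ - 1) * x)
  linarith

lemma tendsto_real_kernel_atBot {σ : ℝ} (h0 : 0 < σ) :
    Tendsto (fun x : ℝ => rexp (σ * x) / (rexp x + 1)) atBot (𝓝 0) := by
  have h : Tendsto (fun x : ℝ => rexp (σ * x)) atBot (𝓝 0) :=
    Real.tendsto_exp_atBot.comp (tendsto_id.const_mul_atBot h0)
  refine squeeze_zero (fun x => by positivity) (fun x => ?_) h
  exact div_le_self (by positivity) (by linarith [Real.exp_pos x])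

/-- Lower bound for the denominator of the kernel, uniform in the closed strip `|Im z| ≤ |θ|`. -/
lemma norm_exp_add_one_ge {θ : ℝ} (hθ : |θ| < π) {x y : ℝ} (hy : |y| ≤ |θ|) :
    √((1 + cos θ) / 2) * (rexp x + 1) ≤ ‖Complex.exp (x + y * Complex.I) + 1‖ := by
  have hcos : cos θ ≤ cos y := by
    rw [← Real.cos_abs θ, ← Real.cos_abs y]
    exact Real.cos_le_cos_of_nonneg_of_le_pi (abs_nonneg _) hθ.le hy
  have hn : ‖Complex.exp (x + y * Complex.I) + 1‖
      = √(rexp x ^ 2 + 2 * rexp x * cos y + 1) := by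
    rw [Complex.norm_eq_sqrt_sq_add_sq]
    congr 1
    simp only [Complex.add_re, Complex.add_im, Complex.exp_re, Complex.exp_im, Complex.one_re,
      Complex.one_im, Complex.mul_re, Complex.mul_im, Complex.ofReal_re, Complex.ofReal_im,
      Complex.I_re, Complex.I_im]
    ring_nf
    nlinarith [Real.sin_sq_add_cos_sq y]
  rw [hn]
  apply Real.le_sqrt_of_sq_le
  rw [mul_pow, Real.sq_sqrt (by linarith [Real.neg_one_le_cos θ])]
  nlinarith [Real.exp_pos x, mul_nonneg (sub_nonneg.2 (Real.cos_le_one θ)) (sq_nonneg (rexp x - 1)),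
    mul_nonneg (sub_nonneg.2 hcos) (Real.exp_pos x).le]

lemma one_add_cos_pos {θ : ℝ} (hθ : |θ| < π) : 0 < 1 + cos θ := by
  have : cos π < cos |θ| :=
    Real.cos_lt_cos_of_nonneg_of_le_pi (abs_nonneg _) le_rfl hθ
  rw [Real.cos_pi, Real.cos_abs] at this
  linarith

lemma exp_add_one_ne_zero {x y : ℝ} (hy : |y| < π) :
    Complex.exp (x + y * Complex.I) + 1 ≠ 0 := by
  have h := norm_exp_add_one_ge hy (x := x) le_rfl
  have := one_add_cos_pos hy
  have h2 : 0 < √((1 + cos y) / 2) * (rexp x + 1) := by positivity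
  exact norm_pos_iff.1 (h2.trans_le h)

/-- Domination of the kernel in a closed strip by the real kernel; it gives both integrability along
horizontal lines and the vanishing of the vertical sides in the contour argument. -/
lemma norm_logisticKernel_le (s : ℂ) {θ : ℝ} (hθ : |θ| < π) :
    ∃ C : ℝ, 0 ≤ C ∧ ∀ x y : ℝ, |y| ≤ |θ| →
      ‖logisticKernel s (x + y * Complex.I)‖ ≤ C * (rexp (s.re * x) / (rexp x + 1)) := by
  have hpos := one_add_cos_pos hθ
  refine ⟨rexp (|s.im| * |θ|) / √((1 + cos θ) / 2), by positivity, fun x y hy => ?_⟩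
  rw [logisticKernel, norm_div, div_mul_div_comm]
  refine div_le_div₀ (by positivity) ?_ (by positivity) (norm_exp_add_one_ge hθ hy)
  rw [Complex.norm_exp, ← Real.exp_add, Real.exp_le_exp]
  simp only [Complex.mul_re, Complex.add_re, Complex.add_im, Complex.mul_im, Complex.ofReal_re,
    Complex.ofReal_im, Complex.I_re, Complex.I_im]
  have h1 : |s.im * y| ≤ |s.im| * |θ| := by rw [abs_mul]; gcongr
  have h2 := neg_abs_le (s.im * y)
  linarith

lemma continuous_logisticKernel (s : ℂ) {y : ℝ} (hy : |y| < π) :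
    Continuous (fun x : ℝ => logisticKernel s (x + y * Complex.I)) := by
  unfold logisticKernel
  exact Continuous.div (by fun_prop) (by fun_prop) fun x => exp_add_one_ne_zero hy

lemma integrable_logisticKernel {s : ℂ} (h0 : 0 < s.re) (h1 : s.re < 1) {y : ℝ} (hy : |y| < π) :
    Integrable (fun x : ℝ => logisticKernel s (x + y * Complex.I)) := by
  obtain ⟨C, -, hC⟩ := norm_logisticKernel_le s hy
  exact ((integrable_real_kernel h0 h1).const_mul C).mono'
    (continuous_logisticKernel s hy).aestronglyMeasurable
    (Eventually.of_forall fun x => hC x y le_rfl)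

/-- Contour shift: Cauchy's theorem on the rectangle with vertices `±R`, `±R + θ i`, as `R → ∞`. -/
lemma integral_logisticKernel_shift {s : ℂ} (h0 : 0 < s.re) (h1 : s.re < 1) {θ : ℝ}
    (hθ : |θ| < π) :
    ∫ x : ℝ, logisticKernel s (x + θ * Complex.I) = ∫ x : ℝ, logisticKernel s x := by
  obtain ⟨C, hC0, hC⟩ := norm_logisticKernel_le s hθ
  have habs : ∀ y ∈ Set.uIcc (0 : ℝ) θ, |y| ≤ |θ| := fun y hy => by
    simpa using Set.abs_sub_left_of_mem_uIcc hy
  have hrect : ∀ R : ℝ,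
      (((∫ x : ℝ in (-R)..R, logisticKernel s x) -
        ∫ x : ℝ in (-R)..R, logisticKernel s (x + θ * Complex.I)) +
        Complex.I • ∫ y : ℝ in (0 : ℝ)..θ, logisticKernel s (R + y * Complex.I)) -
        Complex.I • ∫ y : ℝ in (0 : ℝ)..θ, logisticKernel s ((-R : ℝ) + y * Complex.I) = 0 := by
    intro R
    have := Complex.integral_boundary_rect_eq_zero_of_differentiableOn (logisticKernel s)
      ((-R : ℝ) : ℂ) (R + θ * Complex.I) ?_
    · simpa using this
    · intro z hz
      have hz' : |z.im| ≤ |θ| := by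
        rw [Complex.mem_reProdIm] at hz
        exact habs _ (by simpa using hz.2)
      have hne : Complex.exp z + 1 ≠ 0 := by
        have := exp_add_one_ne_zero (x := z.re) (hz'.trans_lt hθ)
        rwa [Complex.re_add_im] at this
      unfold logisticKernel
      exact DifferentiableAt.differentiableWithinAt
        (DifferentiableAt.div (by fun_prop) (by fun_prop) hne)
  have hside : ∀ u : ℝ → ℝ,
      Tendsto (fun R => rexp (s.re * u R) / (rexp (u R) + 1)) atTop (𝓝 0) →
      Tendsto (fun R => Complex.I • ∫ y : ℝ in (0 : ℝ)..θ, logisticKernel s (u R + y * Complex.I))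
        atTop (𝓝 0) := by
    intro u hu
    have h : Tendsto (fun R => C * (rexp (s.re * u R) / (rexp (u R) + 1)) * |θ - 0|) atTop (𝓝 0) :=
      by simpa using (hu.const_mul C).mul_const |θ - 0|
    refine squeeze_zero_norm (fun R => ?_) h
    rw [norm_smul, Complex.norm_I, one_mul]
    exact intervalIntegral.norm_integral_le_of_norm_le_const fun y hy =>
      hC _ _ (habs y (Set.uIoc_subset_uIcc hy))
  have hz : Integrable (fun x : ℝ => logisticKernel s x) := by
    simpa using integrable_logisticKernel h0 h1 (y := 0) (by simpa using Real.pi_pos)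
  have hlim := (((intervalIntegral_tendsto_integral hz tendsto_neg_atTop_atBot tendsto_id).sub
    (intervalIntegral_tendsto_integral (integrable_logisticKernel h0 h1 hθ)
      tendsto_neg_atTop_atBot tendsto_id)).add
    (hside id (tendsto_real_kernel_atTop h1))).sub
    (hside (fun R => -R) ((tendsto_real_kernel_atBot h0).comp tendsto_neg_atTop_atBot))
  have h00 := tendsto_nhds_unique hlim ((tendsto_congr fun R => hrect R).2 tendsto_const_nhds)
  simp only [add_zero, sub_zero] at h00
  exact (sub_eq_zero.1 h00).symm

/-- The substitution `u = sigmoid x` turns the integral into the beta integral `B(s, 1 - s)`, which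
Euler's reflection formula evaluates. -/
lemma integral_logisticKernel_real {s : ℂ} (h0 : 0 < s.re) (h1 : s.re < 1) :
    ∫ x : ℝ, logisticKernel s x = π / Complex.sin (π * s) := by
  rw [← Complex.Gamma_mul_Gamma_one_sub,
    Complex.Gamma_mul_Gamma_eq_betaIntegral h0 (by simpa using h1), add_sub_cancel,
    Complex.Gamma_one, one_mul, Complex.betaIntegral, intervalIntegral.integral_of_le zero_le_one,
    integral_Ioc_eq_integral_Ioo, ← Real.range_sigmoid, ← Set.image_univ,
    integral_image_eq_integral_abs_deriv_smul MeasurableSet.univ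
      (fun x _ => (Real.hasDerivAt_sigmoid x).hasDerivWithinAt)
      Real.sigmoid_injective.injOn, Measure.restrict_univ]
  congr 1
  ext x
  have hp := Real.sigmoid_pos x
  have hq : 0 < 1 - Real.sigmoid x := by linarith [Real.sigmoid_lt_one x]
  have hq' : 1 - (Real.sigmoid x : ℂ) = ((1 - Real.sigmoid x : ℝ) : ℂ) := by push_cast; ring
  have hpc : (Real.sigmoid x : ℂ) ≠ 0 := by exact_mod_cast hp.ne'
  have hqc : ((1 - Real.sigmoid x : ℝ) : ℂ) ≠ 0 := by exact_mod_cast hq.ne'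
  rw [abs_of_pos (mul_pos hp hq), hq', Complex.real_smul, Complex.ofReal_mul]
  have hlog : Real.log (Real.sigmoid x) = x + Real.log (1 - Real.sigmoid x) := by
    rw [← Real.sigmoid_neg, ← Real.sigmoid_mul_rexp_neg, Real.log_mul hp.ne' (Real.exp_pos _).ne',
      Real.log_exp]
    ring
  -- `u ^ (s - 1) (1 - u) ^ (-s) du = (u / (1 - u)) ^ s (1 - u) dx`, where `u / (1 - u) = exp x`
  have e1 : (Real.sigmoid x : ℂ) * ((1 - Real.sigmoid x : ℝ) : ℂ) *
      ((Real.sigmoid x : ℂ) ^ (s - 1) * ((1 - Real.sigmoid x : ℝ) : ℂ) ^ (1 - s - 1))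
      = (Real.sigmoid x : ℂ) ^ s * ((1 - Real.sigmoid x : ℝ) : ℂ) ^ (1 - s) := by
    rw [Complex.cpow_sub _ _ hpc, Complex.cpow_sub (1 - s) _ hqc, Complex.cpow_one,
      Complex.cpow_one]
    field_simp
  rw [e1, Complex.cpow_sub _ _ hqc, Complex.cpow_one, Complex.cpow_def_of_ne_zero hpc,
    Complex.cpow_def_of_ne_zero hqc, ← Complex.ofReal_log hp.le, ← Complex.ofReal_log hq.le, hlog,
    logisticKernel]
  have e2 : ((1 - Real.sigmoid x : ℝ) : ℂ) = 1 / (Complex.exp x + 1) := by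
    rw [← Real.sigmoid_neg, Real.sigmoid_def]
    push_cast
    rw [neg_neg, one_div, add_comm]
  rw [e2]
  have e3 : Complex.exp (((x + Real.log (1 - Real.sigmoid x) : ℝ) : ℂ) * s)
      = Complex.exp (s * x) * Complex.exp ((Real.log (1 - Real.sigmoid x) : ℝ) * s) := by
    rw [← Complex.exp_add]
    congr 1
    push_cast
    ring
  rw [e3]
  have := Complex.exp_ne_zero ((Real.log (1 - Real.sigmoid x) : ℝ) * s)
  field_simp

/-- Partial fractions, from
`(exp (x - iθ) + 1) (exp (x + iθ) + 1) = 2 exp x (cosh x + cos θ)`. -/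
lemma exp_div_cosh_add_cos_eq (s : ℂ) {θ : ℝ} (hθ : |θ| < π) (hs : sin θ ≠ 0) (x : ℝ) :
    Complex.exp (s * x) / (Complex.cosh x + Complex.cos θ) =
      (Complex.exp (θ * s * Complex.I) * logisticKernel s (x + (-θ : ℝ) * Complex.I) -
        Complex.exp (-(θ * s * Complex.I)) * logisticKernel s (x + θ * Complex.I)) /
        (Complex.I * Complex.sin θ) := by
  have hs' : Complex.sin θ ≠ 0 := by exact_mod_cast hs
  have n1 : Complex.exp (x + (-θ : ℝ) * Complex.I) + 1 ≠ 0 :=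
    exp_add_one_ne_zero (by rwa [abs_neg])
  have n2 : Complex.exp (x + θ * Complex.I) + 1 ≠ 0 := exp_add_one_ne_zero hθ
  have a1 : Complex.exp (θ * s * Complex.I) * Complex.exp (s * (x + (-θ : ℝ) * Complex.I))
      = Complex.exp (s * x) := by
    rw [← Complex.exp_add]; congr 1; push_cast; ring
  have a2 : Complex.exp (-(θ * s * Complex.I)) * Complex.exp (s * (x + θ * Complex.I))
      = Complex.exp (s * x) := by
    rw [← Complex.exp_add]; congr 1; ring
  have hX := Complex.exp_ne_zero x
  have hT := Complex.exp_ne_zero (θ * Complex.I)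
  have b1 : Complex.exp (x + (-θ : ℝ) * Complex.I)
      = Complex.exp x * (Complex.exp (θ * Complex.I))⁻¹ := by
    rw [← Complex.exp_neg, ← Complex.exp_add]; congr 1; push_cast; ring
  have b2 : Complex.exp (x + θ * Complex.I) = Complex.exp x * Complex.exp (θ * Complex.I) :=
    Complex.exp_add _ _
  have hprod : (Complex.exp (x + (-θ : ℝ) * Complex.I) + 1) * (Complex.exp (x + θ * Complex.I) + 1)
      = 2 * Complex.exp x * (Complex.cosh x + Complex.cos θ) := by
    rw [b1, b2, Complex.cosh, Complex.cos, neg_mul, Complex.exp_neg, Complex.exp_neg]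
    field_simp
    ring
  have hdiff : Complex.exp (x + θ * Complex.I) - Complex.exp (x + (-θ : ℝ) * Complex.I)
      = 2 * Complex.exp x * (Complex.I * Complex.sin θ) := by
    rw [b1, b2, Complex.sin, neg_mul, Complex.exp_neg]
    field_simp
    linear_combination (Complex.exp (θ * Complex.I) ^ 2 - 1) * Complex.I_sq
  have hD : Complex.cosh x + Complex.cos θ ≠ 0 := by
    intro h
    rw [h, mul_zero] at hprod
    exact (mul_ne_zero n1 n2) hprod
  have hI := Complex.I_ne_zero
  simp only [logisticKernel]
  rw [← mul_div_assoc, ← mul_div_assoc, a1, a2, div_sub_div _ _ n1 n2, hprod]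
  have hnum : Complex.exp (s * x) * (Complex.exp (x + θ * Complex.I) + 1) -
      (Complex.exp (x + (-θ : ℝ) * Complex.I) + 1) * Complex.exp (s * x)
      = Complex.exp (s * x) * (2 * Complex.exp x * (Complex.I * Complex.sin θ)) := by
    rw [← hdiff]; ring
  rw [hnum]
  field_simp

lemma integral_exp_div_cosh_add_cos {s : ℂ} (h0 : 0 < s.re) (h1 : s.re < 1) {θ : ℝ}
    (hθ : |θ| < π) (hs : sin θ ≠ 0) :
    Integrable (fun x : ℝ => Complex.exp (s * x) / (Complex.cosh x + Complex.cos θ)) ∧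
    ∫ x : ℝ, Complex.exp (s * x) / (Complex.cosh x + Complex.cos θ) =
      2 * π * Complex.sin (θ * s) / (Complex.sin θ * Complex.sin (π * s)) := by
  have hθ' : |-θ| < π := by rwa [abs_neg]
  have i1 := (integrable_logisticKernel h0 h1 hθ').const_mul (Complex.exp (θ * s * Complex.I))
  have i2 := (integrable_logisticKernel h0 h1 hθ).const_mul (Complex.exp (-(θ * s * Complex.I)))
  simp only [exp_div_cosh_add_cos_eq s hθ hs]
  refine ⟨(i1.sub i2).div_const _, ?_⟩
  rw [integral_div, integral_sub i1 i2, integral_const_mul, integral_const_mul,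
    integral_logisticKernel_shift h0 h1 hθ, integral_logisticKernel_shift h0 h1 hθ',
    integral_logisticKernel_real h0 h1, ← sub_mul]
  have : Complex.exp (θ * s * Complex.I) - Complex.exp (-(θ * s * Complex.I))
      = 2 * Complex.I * Complex.sin (θ * s) := by
    rw [Complex.sin, neg_mul]
    linear_combination (Complex.exp (θ * s * Complex.I) - Complex.exp (-(θ * s * Complex.I)))
      * Complex.I_sq
  rw [this]
  have hI := Complex.I_ne_zero
  field_simp

/-- The formula `cot (p + q) = (sin 2p - sin 2q) / (cos 2q - cos 2p)`, cleared of denominators.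
With `p` real and `q` imaginary it separates the real and imaginary parts of the cotangent. -/
lemma cos_mul_cos_sub_cos (p q : ℂ) :
    Complex.cos (p + q) * (Complex.cos (2 * q) - Complex.cos (2 * p)) =
      Complex.sin (p + q) * (Complex.sin (2 * p) - Complex.sin (2 * q)) := by
  have hp := Complex.sin_sq_add_cos_sq p
  have hq := Complex.sin_sq_add_cos_sq q
  have h1 : Complex.cos (2 * q) - Complex.cos (2 * p)
      = 2 * (Complex.sin (p + q) * Complex.sin (p - q)) := by
    rw [Complex.sin_add, Complex.sin_sub, Complex.cos_two_mul, Complex.cos_two_mul]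
    linear_combination -2 * Complex.cos q ^ 2 * hp + 2 * Complex.cos p ^ 2 * hq
  have h2 : Complex.sin (2 * p) - Complex.sin (2 * q)
      = 2 * (Complex.cos (p + q) * Complex.sin (p - q)) := by
    rw [Complex.cos_add, Complex.sin_sub, Complex.sin_two_mul, Complex.sin_two_mul]
    linear_combination 2 * Complex.sin q * Complex.cos q * hp -
      2 * Complex.sin p * Complex.cos p * hq
  rw [h1, h2]
  ring

theorem stmt_19 (t : ℝ) :
    Real.sqrt (2 / π) *
      ∫ x in Set.Ioi (0:ℝ),
        (Real.sinh (Real.sqrt π * x) /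
          (Real.cosh (Real.sqrt (2 * π) * x) - Real.cos (Real.sqrt 2 * π))) * Real.sin (t * x)
      = Real.sinh (Real.sqrt π * t) /
          (Real.cosh (Real.sqrt (2 * π) * t) - Real.cos (Real.sqrt 2 * π)) := by
  set r := √2 with hr
  set α := √π with hα
  have hr0 : 0 < r := by positivity
  have hα0 : 0 < α := Real.sqrt_pos.2 Real.pi_pos
  have hr2 : r ^ 2 = 2 := Real.sq_sqrt (by norm_num)
  have hα2 : α ^ 2 = π := Real.sq_sqrt Real.pi_pos.le
  have hβ : √(2 * π) = r * α := Real.sqrt_mul (by norm_num) _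
  have hq : √(2 / π) = r / α := Real.sqrt_div (by norm_num) _
  rw [hβ, hq]
  have hr1 : 1 < r := by nlinarith
  have hr3 : r < 3 / 2 := by nlinarith
  have hπ := Real.pi_pos
  -- the shift by `π` turns `- cos (r π)` into `+ cos θ` with `|θ| < π`
  set θ : ℝ := r * π - π with hθdef
  have hθ0 : 0 < θ := by rw [hθdef]; nlinarith
  have hθπ : θ < π := by rw [hθdef]; nlinarith
  have hθ : |θ| < π := by rwa [abs_of_pos hθ0]
  have hsin : sin θ = -sin (r * π) := Real.sin_sub_pi _
  have hcos : cos θ = -cos (r * π) := Real.cos_sub_pi _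
  have hsθ : sin θ ≠ 0 := (Real.sin_pos_of_pos_of_lt_pi hθ0 hθπ).ne'
  have hD : ∀ x : ℝ, 0 < cosh x - cos (r * π) := fun x => by
    have := one_add_cos_pos hθ
    have := Real.one_le_cosh x
    linarith
  set s : ℂ := (α + t * Complex.I) / (r * α) with hsdef
  have hrC : (r : ℂ) ≠ 0 := by exact_mod_cast hr0.ne'
  have hαC : (α : ℂ) ≠ 0 := by exact_mod_cast hα0.ne'
  have hr2C : (r : ℂ) ^ 2 = 2 := by exact_mod_cast hr2
  have hα2C : (α : ℂ) ^ 2 = π := by exact_mod_cast hα2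
  have hsre : s.re = 1 / r := by
    have : s = ((1 / r : ℝ) : ℂ) + ((t / (r * α) : ℝ) : ℂ) * Complex.I := by
      rw [hsdef]; push_cast; field_simp
    rw [this, Complex.add_re, Complex.re_ofReal_mul, Complex.I_re, mul_zero, add_zero,
      Complex.ofReal_re]
  have h0 : 0 < s.re := by rw [hsre]; positivity
  have h1 : s.re < 1 := by rw [hsre, div_lt_one hr0]; exact hr1
  obtain ⟨hint, hval⟩ := integral_exp_div_cosh_add_cos h0 h1 hθ hsθ
  have hβ0 : 0 < r * α := by positivity
  have hint' := hint.comp_mul_left' hβ0.ne'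
  have hval' := Measure.integral_comp_mul_left
    (fun x : ℝ => Complex.exp (s * x) / (Complex.cosh x + Complex.cos θ)) (r * α)
  rw [hval, abs_of_pos (inv_pos.2 hβ0), Complex.real_smul] at hval'
  set J : ℝ → ℝ := fun x => rexp (α * x) / (cosh (r * α * x) - cos (r * π)) * sin (t * x) with hJ
  have him : ∀ x : ℝ, (Complex.exp (s * (r * α * x : ℝ)) /
      (Complex.cosh (r * α * x : ℝ) + Complex.cos θ)).im = J x := by
    intro x
    have e1 : Complex.cosh (r * α * x : ℝ) + Complex.cos θ
        = ((cosh (r * α * x) - cos (r * π) : ℝ) : ℂ) := by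
      rw [← Complex.ofReal_cosh, ← Complex.ofReal_cos, hcos]; push_cast; ring
    have e2 : s * (r * α * x : ℝ) = (α * x : ℝ) + (t * x : ℝ) * Complex.I := by
      rw [hsdef]; push_cast; field_simp
    rw [e1, e2, Complex.div_ofReal_im, Complex.exp_im]
    simp [hJ]
    ring
  have hJint : Integrable J := by
    refine (hint'.im).congr (Eventually.of_forall fun x => ?_)
    exact him x
  have hJval : ∫ x, J x = sinh (α * t) / (cosh (r * α * t) - cos (r * π)) * (α * r) := by
    have e : ∫ x, J x = (∫ x : ℝ, Complex.exp (s * (r * α * x : ℝ)) /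
      (Complex.cosh (r * α * x : ℝ) + Complex.cos θ)).im := by
      rw [← Complex.imCLM_apply, ← Complex.imCLM.integral_comp_comm hint']
      exact integral_congr_ae (Eventually.of_forall fun x => (him x).symm)
    rw [e, hval']
    set p : ℂ := ((r * π / 2 : ℝ) : ℂ) with hp
    set q : ℂ := ((r * α * t / 2 : ℝ) : ℂ) * Complex.I with hqdef
    have hw : π * s = p + q := by
      rw [hsdef, hp, hqdef, ← hα2C]; push_cast; rw [← hα2C]; field_simp
      linear_combination (-(α:ℂ) - t * Complex.I) * hr2C
    have hu : θ * s = π - (p + q - (α * t : ℝ) * Complex.I) := by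
      have : (θ : ℂ) * s = r * π * s - π * s := by rw [hθdef]; push_cast; ring
      rw [this, hw, hsdef]; push_cast; rw [← hα2C]; field_simp
      ring
    -- a zero of `sin` would make `s` an integer, which `0 < Re s < 1` excludes
    have hwne : Complex.sin (p + q) ≠ 0 := by
      rw [← hw]
      intro h
      obtain ⟨k, hk⟩ := Complex.sin_eq_zero_iff.1 h
      have hk' : s = (k : ℝ) := by
        have : (π : ℂ) ≠ 0 := by exact_mod_cast hπ.ne'
        apply mul_left_cancel₀ this
        rw [hk]; push_cast; ring
      rw [hk', Complex.ofReal_re] at h0 h1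
      have a : 0 < k := by exact_mod_cast h0
      have b : k < 1 := by exact_mod_cast h1
      omega
    have hDt := (hD (r * α * t)).ne'
    have hDC : ((cosh (r * α * t) - cos (r * π) : ℝ) : ℂ) ≠ 0 := by exact_mod_cast hDt
    have hcot : Complex.cos (p + q) / Complex.sin (p + q)
        = (sin (r * π) - sinh (r * α * t) * Complex.I) /
          ((cosh (r * α * t) - cos (r * π) : ℝ) : ℂ) := by
      rw [div_eq_div_iff hwne hDC]
      have h := cos_mul_cos_sub_cos p q
      have p2 : 2 * p = (r * π : ℝ) := by rw [hp]; push_cast; ring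
      have q2 : 2 * q = (r * α * t : ℝ) * Complex.I := by rw [hqdef]; push_cast; ring
      rw [p2, q2, Complex.cos_mul_I, Complex.sin_mul_I] at h
      push_cast at h ⊢
      rw [h]; ring
    have hratio : Complex.sin (θ * s) / Complex.sin (π * s) =
        cosh (α * t) - sinh (α * t) * Complex.I * (Complex.cos (p + q) / Complex.sin (p + q)) := by
      rw [hu, hw, Complex.sin_pi_sub, Complex.sin_sub, Complex.cos_mul_I, Complex.sin_mul_I,
        Complex.ofReal_cosh, Complex.ofReal_sinh]
      field_simp
    have hS : sin (r * π) ≠ 0 := fun h => hsθ (by rw [hsin, h, neg_zero])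
    have hSC : (sin (r * π) : ℂ) ≠ 0 := by exact_mod_cast hS
    have hfin : ((r * α)⁻¹ : ℝ) * (2 * π * Complex.sin (θ * s) /
        (Complex.sin θ * Complex.sin (π * s))) =
        ((-(α * r / sin (r * π)) * (cosh (α * t) - sinh (α * t) * sinh (r * α * t) /
          (cosh (r * α * t) - cos (r * π))) : ℝ) : ℂ) +
        ((sinh (α * t) / (cosh (r * α * t) - cos (r * π)) * (α * r) : ℝ) : ℂ) * Complex.I := by
      have : 2 * π * Complex.sin (θ * s) / (Complex.sin θ * Complex.sin (π * s))
        = 2 * π / Complex.sin θ * (Complex.sin (θ * s) / Complex.sin (π * s)) := by ring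
      rw [this, hratio, hcot, ← Complex.ofReal_sin, hsin, ← hα2C, ← hr2C]
      push_cast at hDC hSC ⊢
      field_simp
      linear_combination -(Complex.sinh (α * t) * Complex.sinh (r * α * t)) * Complex.I_sq
    rw [hfin, Complex.add_im, Complex.ofReal_im, Complex.im_ofReal_mul, Complex.I_im, mul_one,
      zero_add]
  -- symmetrising `x ↦ -x` turns `exp` into `sinh`, and the half line is half of the line
  set F : ℝ → ℝ := fun x => sinh (α * x) / (cosh (r * α * x) - cos (r * π)) * sin (t * x) with hF
  have hFeven : ∀ x, F |x| = F x := by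
    intro x
    rcases abs_choice x with h | h <;> rw [h]
    simp only [hF, mul_neg, sinh_neg, cosh_neg, sin_neg]
    ring
  have hFJ : ∀ x, F x = (J x + J (-x)) / 2 := by
    intro x
    simp only [hF, hJ, mul_neg, cosh_neg, sin_neg, sinh_eq]
    ring
  have hFint : ∫ x, F x = ∫ x, J x := by
    simp only [hFJ]
    rw [integral_div, integral_add hJint hJint.comp_neg, integral_neg_eq_self]
    ring
  have hhalf : ∫ x, F x = 2 * ∫ x in Set.Ioi (0:ℝ), F x := by
    rw [← integral_comp_abs (f := F)]
    simp only [hFeven]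
  have : ∫ x in Set.Ioi (0:ℝ), F x =
      sinh (α * t) / (cosh (r * α * t) - cos (r * π)) * (α * r) / 2 := by
    linarith
  rw [this]
  have hDt := (hD (r * α * t)).ne'
  field_simp
  linear_combination sinh (α * t) * hr2
end
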